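/- arXiv:2305.15807 — 2 statements merged into one kernel-verified Lean document; each statement's English description precedes it below -/
import Mathlib

section
/- (Lemma 1 of the paper.) In the online CBwK protocol with Assumption (EST), fix δ ∈ (0,1) and 0 < b < min B, and suppose the problem (r,c,B',ν) is feasible for some B' < B − b·1. Run the Box B strategy with step size γ > 0, confidence parameter δ/4, and margin b. Then with probability at least 1−δ, for all 1 ≤ t ≤ T: ‖ ( Σ_{τ=1}^t c_τ − t(B − b·1) )₊ ‖ ≤ (1 + 3‖λ*_{B−b·1}‖)/γ + 20 √d · Υ_{T,δ}, where λ*_{B−b·1} is a minimizer of λ ↦ E_{X∼ν}[max_{a∈A}{ r(X,a) − ⟨c(X,a) − (B−b·1), λ⟩ }] over λ ∈ [0,∞)^d, (·)₊ is the componentwise positive part, and ‖·‖ the Euclidean norm. -/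
open MeasureTheory ProbabilityTheory Finset

namespace CBwK

variable {X : Type*} [MeasurableSpace X] {A : Type*} [Fintype A] [Nonempty A]
  [MeasurableSpace A] {d : ℕ} {Ω : Type*} [MeasurableSpace Ω]

/-- A static policy: a measurable map `X → P(A)` with components `(π_a)_{a∈A}`. -/
def IsPolicy (π : X → A → ℝ) : Prop :=
  (∀ x a, 0 ≤ π x a) ∧ (∀ x, ∑ a, π x a = 1) ∧ (∀ a, Measurable fun x => π x a)

/-- Expected reward `E_{X∼ν}[Σ_a r(X,a) π_a(X)]` of a policy. -/
noncomputable def polReward (ν : Measure X) (r : X → A → ℝ) (π : X → A → ℝ) : ℝ :=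
  ∫ x, ∑ a, r x a * π x a ∂ν

/-- Component `i` of the expected cost vector of a policy. -/
noncomputable def polCost (ν : Measure X) (c : X → A → Fin d → ℝ) (π : X → A → ℝ)
    (i : Fin d) : ℝ :=
  ∫ x, ∑ a, c x a i * π x a ∂ν

/-- The problem `(r,c,B',ν)` is feasible. -/
def Feasible (ν : Measure X) (c : X → A → Fin d → ℝ) (B' : Fin d → ℝ) : Prop :=
  ∃ π, IsPolicy π ∧ ∀ i, polCost ν c π i ≤ B' i

/-- `OPT(r,c,B')`: optimal expected reward under the expected-cost constraints `B'`. -/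
noncomputable def OPT (ν : Measure X) (r : X → A → ℝ) (c : X → A → Fin d → ℝ)
    (B' : Fin d → ℝ) : ℝ :=
  sSup {y : ℝ | ∃ π, IsPolicy π ∧ (∀ i, polCost ν c π i ≤ B' i) ∧ y = polReward ν r π}

/-- `L(λ,C) = E_{X∼ν}[ max_a { r(X,a) − ⟨c(X,a) − C, λ⟩ } ]`. -/
noncomputable def L (ν : Measure X) (r : X → A → ℝ) (c : X → A → Fin d → ℝ)
    (lam : Fin d → ℝ) (C : Fin d → ℝ) : ℝ :=
  ∫ x, Finset.univ.sup' Finset.univ_nonempty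
    (fun a => r x a - ∑ i, (c x a i - C i) * lam i) ∂ν

/-- Euclidean norm on `ℝ^d`. -/
noncomputable def enorm (v : Fin d → ℝ) : ℝ := Real.sqrt (∑ i, (v i) ^ 2)

/-- Smallest component of a vector of `ℝ^d` (junk value `0` if `d = 0`). -/
noncomputable def minComp (v : Fin d → ℝ) : ℝ := ⨅ i, v i

/-- The online CBwK protocol over `T` rounds (contexts i.i.d. `ν`; rewards and costs with
conditional expectations `r(x_t,a_t)` and `c(x_t,a_t)` given the past, `x_t` and `a_t`),
together with the estimation procedure of Assumption (EST). -/
structure Protocol (ν : Measure X) (r : X → A → ℝ) (c : X → A → Fin d → ℝ) (T : ℕ)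
    (P : Measure Ω) where
  /-- contexts -/
  x : ℕ → Ω → X
  /-- actions picked by the learner -/
  act : ℕ → Ω → A
  /-- rewards obtained -/
  rew : ℕ → Ω → ℝ
  /-- cost vectors suffered -/
  cost : ℕ → Ω → Fin d → ℝ
  /-- filtration of the information available after each round -/
  F : Filtration ℕ (inferInstance : MeasurableSpace Ω)
  rew_mem : ∀ t ω, rew t ω ∈ Set.Icc (0 : ℝ) 1
  cost_mem : ∀ t ω i, cost t ω i ∈ Set.Icc (-1 : ℝ) 1
  x_adapted : ∀ t, Measurable[F t] (x t)
  act_adapted : ∀ t, Measurable[F t] (act t)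
  rew_adapted : ∀ t, Measurable[F t] (rew t)
  cost_adapted : ∀ t i, Measurable[F t] fun ω => cost t ω i
  /-- the context of round `t` is distributed according to `ν` … -/
  x_law : ∀ t, 1 ≤ t → t ≤ T → P.map (x t) = ν
  /-- … independently of the past -/
  x_indep : ∀ t, 1 ≤ t → t ≤ T →
    Indep (MeasurableSpace.comap (x t) inferInstance) (F (t - 1)) P
  /-- the conditional expectation of `r_t` given the past, `x_t` and `a_t` is `r(x_t,a_t)` -/
  rew_condExp : ∀ t, 1 ≤ t → t ≤ T →
    P[rew t | (F (t - 1) : MeasurableSpace Ω)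
        ⊔ MeasurableSpace.comap (x t) inferInstance
        ⊔ MeasurableSpace.comap (act t) inferInstance]
      =ᵐ[P] fun ω => r (x t ω) (act t ω)
  /-- the conditional expectation of `c_t` given the past, `x_t` and `a_t` is `c(x_t,a_t)` -/
  cost_condExp : ∀ t, 1 ≤ t → t ≤ T → ∀ i,
    P[fun ω => cost t ω i | (F (t - 1) : MeasurableSpace Ω)
        ⊔ MeasurableSpace.comap (x t) inferInstance
        ⊔ MeasurableSpace.comap (act t) inferInstance]
      =ᵐ[P] fun ω => c (x t ω) (act t ω) i
  /-- estimates of the reward function, built on the data of the first `t` rounds -/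
  rhat : ℕ → Ω → X → A → ℝ
  /-- estimates of the cost function, built on the data of the first `t` rounds -/
  chat : ℕ → Ω → X → A → Fin d → ℝ
  /-- known error functions (the last argument is the confidence parameter `δ`) -/
  eps : ℕ → Ω → X → A → ℝ → ℝ
  rhat_mem : ∀ t ω x' a', rhat t ω x' a' ∈ Set.Icc (0 : ℝ) 1
  chat_mem : ∀ t ω x' a' i, chat t ω x' a' i ∈ Set.Icc (-1 : ℝ) 1
  eps_mem : ∀ t ω x' a' δ', eps t ω x' a' δ' ∈ Set.Icc (0 : ℝ) 1
  rhat_adapted : ∀ t x' a', Measurable[F t] fun ω => rhat t ω x' a'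
  chat_adapted : ∀ t x' a' i, Measurable[F t] fun ω => chat t ω x' a' i
  eps_adapted : ∀ t x' a' δ', Measurable[F t] fun ω => eps t ω x' a' δ'
  /-- Assumption (EST): uniform estimation errors, with probability at least `1 − δ'` -/
  est : ∀ δ' : ℝ, 0 < δ' → δ' ≤ 1 →
    ENNReal.ofReal (1 - δ') ≤ P {ω | ∀ t ≤ T, ∀ x' a',
      |rhat t ω x' a' - r x' a'| ≤ eps t ω x' a' δ'
      ∧ ∀ i, |chat t ω x' a' i - c x' a' i| ≤ eps t ω x' a' δ'}

variable {ν : Measure X} {r : X → A → ℝ} {c : X → A → Fin d → ℝ} {T : ℕ} {P : Measure Ω}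

/-- Optimistic (clipped) upper-confidence estimate of the reward function. -/
noncomputable def Protocol.rucb (p : Protocol ν r c T P) (δ' : ℝ) (t : ℕ) (ω : Ω)
    (x' : X) (a' : A) : ℝ :=
  min (max (p.rhat t ω x' a' + p.eps t ω x' a' δ') 0) 1

/-- Optimistic (clipped) lower-confidence estimate of the cost function. -/
noncomputable def Protocol.clcb (p : Protocol ν r c T P) (δ' : ℝ) (t : ℕ) (ω : Ω)
    (x' : X) (a' : A) (i : Fin d) : ℝ :=
  min (max (p.chat t ω x' a' i - p.eps t ω x' a' δ') (-1)) 1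

/-- `β_{T,δ'} = Σ_{t=1}^T ε_{t−1}(x_t,a_t,δ')`. -/
noncomputable def Protocol.beta (p : Protocol ν r c T P) (δ' : ℝ) (ω : Ω) : ℝ :=
  ∑ t ∈ Finset.Icc 1 T, p.eps (t - 1) ω (p.x t ω) (p.act t ω) δ'

/-- `Υ_{T,δ} = max{ β_{T,δ/4}, 2√(dT ln(4T²/δ)), √(2T ln(8(d+1)T/δ)) }`. -/
noncomputable def Protocol.Upsilon (p : Protocol ν r c T P) (δ : ℝ) (ω : Ω) : ℝ :=
  max (p.beta (δ / 4) ω)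
    (max (2 * Real.sqrt (d * T * Real.log (4 * T ^ 2 / δ)))
      (Real.sqrt (2 * T * Real.log (8 * (d + 1) * T / δ))))

/-- The Box B strategy with average cost constraints `B`, step size `γ`, confidence
parameter `δ'` and margin `b`: actions maximize the optimistic Lagrangian, and the dual
variables follow projected-gradient-descent updates. -/
structure BoxB (p : Protocol ν r c T P) (B : Fin d → ℝ) (γ δ' b : ℝ) where
  /-- dual iterates -/
  lam : ℕ → Ω → Fin d → ℝ
  lam_zero : ∀ ω i, lam 0 ω i = 0
  /-- `a_t` maximizes the optimistic Lagrangian with dual variable `λ_{t−1}` -/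
  act_max : ∀ t, 1 ≤ t → t ≤ T → ∀ ω, ∀ a' : A,
    p.rucb δ' (t - 1) ω (p.x t ω) a'
        - ∑ i, (p.clcb δ' (t - 1) ω (p.x t ω) a' i - (B i - b)) * lam (t - 1) ω i
      ≤ p.rucb δ' (t - 1) ω (p.x t ω) (p.act t ω)
        - ∑ i, (p.clcb δ' (t - 1) ω (p.x t ω) (p.act t ω) i - (B i - b)) * lam (t - 1) ω i
  /-- projected-gradient-descent update of the dual variables -/
  lam_update : ∀ t, 1 ≤ t → t ≤ T → ∀ ω i,
    lam t ω i = max (lam (t - 1) ω i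
      + γ * (p.clcb δ' (t - 1) ω (p.x t ω) (p.act t ω) i - (B i - b))) 0


set_option linter.unusedSectionVars false
lemma exp_le_cosh_sinh (θ R y : ℝ) (hR : 0 < R) (hy : |y| ≤ R) :
    Real.exp (θ * y) ≤ Real.cosh (θ * R) + y / R * Real.sinh (θ * R) := by
  have h := abs_le.1 hy
  have ha : 0 ≤ (1 + y / R) / 2 := by
    have : -1 ≤ y / R := by rw [le_div_iff₀ hR]; linarith
    linarith
  have hb : 0 ≤ (1 - y / R) / 2 := by
    have : y / R ≤ 1 := by rw [div_le_iff₀ hR]; linarith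
    linarith
  have hc := convexOn_exp.2 (Set.mem_univ (θ * R)) (Set.mem_univ (-(θ * R))) ha hb (by ring)
  have e1 : ((1 + y / R) / 2) • (θ * R) + ((1 - y / R) / 2) • (-(θ * R)) = θ * y := by
    simp only [smul_eq_mul]; field_simp; ring
  rw [e1] at hc
  refine hc.trans (le_of_eq ?_)
  rw [Real.cosh_eq, Real.sinh_eq]
  simp only [smul_eq_mul]; ring

/-- Martingale-difference sequence w.r.t. a filtration, in weak form. -/
def IsMD {Ω : Type*} {m0 : MeasurableSpace Ω} (P : Measure Ω) (F : Filtration ℕ m0)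
    (T : ℕ) (R : ℝ) (ξ : ℕ → Ω → ℝ) : Prop :=
  (∀ k, Measurable[F (k + 1)] (ξ k)) ∧ (∀ k ω, |ξ k ω| ≤ R) ∧
  (∀ k < T, ∀ Y : Ω → ℝ, Measurable[F k] Y → (∃ K, ∀ ω, |Y ω| ≤ K) → ∫ ω, Y ω * ξ k ω ∂P = 0)

lemma sum_meas {Ω : Type*} {m0 : MeasurableSpace Ω} (F : Filtration ℕ m0)
    (ξ : ℕ → Ω → ℝ) (hm : ∀ k, Measurable[F (k + 1)] (ξ k)) (s t : ℕ) :
    Measurable[F t] (fun ω => ∑ k ∈ Finset.Ico s t, ξ k ω) := by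
  refine Finset.measurable_sum (m := F t) _ fun k hk => ?_
  exact (hm k).mono (F.mono (by have := Finset.mem_Ico.1 hk; omega)) le_rfl

lemma sum_bdd {Ω : Type*} (ξ : ℕ → Ω → ℝ) (R : ℝ) (hb : ∀ k ω, |ξ k ω| ≤ R) (s t : ℕ) (ω : Ω) :
    |∑ k ∈ Finset.Ico s t, ξ k ω| ≤ ((t - s : ℕ) : ℝ) * R := by
  refine (Finset.abs_sum_le_sum_abs _ _).trans ?_
  refine (Finset.sum_le_sum fun k _ => hb k ω).trans ?_
  simp

lemma exp_bdd_integrable {Ω : Type*} {m0 : MeasurableSpace Ω} (P : Measure Ω)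
    [IsProbabilityMeasure P] (f : Ω → ℝ) (hf : Measurable f) (K : ℝ) (hK : ∀ ω, |f ω| ≤ K) :
    Integrable f P :=
  Integrable.of_bound hf.aestronglyMeasurable K (Filter.Eventually.of_forall hK)

lemma mgf_bound {Ω : Type*} {m0 : MeasurableSpace Ω} (P : Measure Ω) [IsProbabilityMeasure P]
    (F : Filtration ℕ m0) (T : ℕ) (R : ℝ) (hR : 0 < R) (ξ : ℕ → Ω → ℝ) (h : IsMD P F T R ξ)
    (θ : ℝ) (s t : ℕ) (ht : t ≤ T) :
    ∫ ω, Real.exp (θ * ∑ k ∈ Finset.Ico s t, ξ k ω) ∂P ≤ Real.exp (t * (θ ^ 2 * R ^ 2 / 2)) := by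
  obtain ⟨hm, hb, h0⟩ := h
  induction t with
  | zero => simp
  | succ t ih =>
    by_cases hs : s ≤ t
    · have ih := ih (by omega)
      set Y : Ω → ℝ := fun ω => Real.exp (θ * ∑ k ∈ Finset.Ico s t, ξ k ω) with hY
      have hYm : Measurable[F t] Y :=
        Real.measurable_exp.comp ((sum_meas F ξ hm s t).const_mul θ)
      have hYb : ∀ ω, |Y ω| ≤ Real.exp (|θ| * (((t - s : ℕ) : ℝ) * R)) := by
        intro ω
        rw [hY, Real.abs_exp, Real.exp_le_exp]
        refine (le_abs_self _).trans ?_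
        rw [abs_mul]
        exact mul_le_mul_of_nonneg_left (sum_bdd ξ R hb s t ω) (abs_nonneg _)
      have hYm' : Measurable Y := hYm.mono (F.le t) le_rfl
      have hξm : Measurable (ξ t) := (hm t).mono (F.le _) le_rfl
      have hYi : Integrable Y P := exp_bdd_integrable P Y hYm' _ hYb
      have hYξ : Integrable (fun ω => Y ω * ξ t ω) P :=
        exp_bdd_integrable P _ (hYm'.mul hξm) (Real.exp (|θ| * (((t - s : ℕ) : ℝ) * R)) * R)
          (fun ω => by
            rw [abs_mul]
            exact mul_le_mul (hYb ω) (hb t ω) (abs_nonneg _) (Real.exp_pos _).le)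
      have h1 : ∀ ω, Real.exp (θ * ∑ k ∈ Finset.Ico s (t + 1), ξ k ω)
          ≤ Real.cosh (θ * R) * Y ω + (Real.sinh (θ * R) / R) * (Y ω * ξ t ω) := by
        intro ω
        rw [Finset.sum_Ico_succ_top hs, mul_add, Real.exp_add]
        have := mul_le_mul_of_nonneg_left (exp_le_cosh_sinh θ R (ξ t ω) hR (hb t ω))
          (Real.exp_pos (θ * ∑ k ∈ Finset.Ico s t, ξ k ω)).le
        refine this.trans (le_of_eq ?_)
        simp only [hY]; ring
      have h2 : ∫ ω, Real.exp (θ * ∑ k ∈ Finset.Ico s (t + 1), ξ k ω) ∂P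
          ≤ ∫ ω, (Real.cosh (θ * R) * Y ω + (Real.sinh (θ * R) / R) * (Y ω * ξ t ω)) ∂P := by
        refine integral_mono_of_nonneg (Filter.Eventually.of_forall fun ω => (Real.exp_pos _).le)
          ((hYi.const_mul _).add (hYξ.const_mul _)) (Filter.Eventually.of_forall h1)
      rw [integral_add (hYi.const_mul _) (hYξ.const_mul _), integral_const_mul,
        integral_const_mul, h0 t (by omega) Y hYm ⟨_, hYb⟩, mul_zero, add_zero] at h2
      refine h2.trans ?_
      have h3 : Real.cosh (θ * R) ≤ Real.exp (θ ^ 2 * R ^ 2 / 2) := by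
        have := Real.cosh_le_exp_half_sq (θ * R)
        rwa [mul_pow] at this
      calc Real.cosh (θ * R) * ∫ ω, Y ω ∂P
          ≤ Real.exp (θ ^ 2 * R ^ 2 / 2) * Real.exp (t * (θ ^ 2 * R ^ 2 / 2)) :=
            mul_le_mul h3 ih (integral_nonneg fun ω => (Real.exp_pos _).le) (Real.exp_pos _).le
        _ = _ := by rw [← Real.exp_add]; congr 1; push_cast; ring
    · have : Finset.Ico s (t + 1) = ∅ := Finset.Ico_eq_empty (by omega)
      simp only [this, Finset.sum_empty, mul_zero, Real.exp_zero]
      simp only [integral_const, probReal_univ, smul_eq_mul, mul_one]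
      exact Real.one_le_exp (by positivity)

lemma azuma {Ω : Type*} {m0 : MeasurableSpace Ω} (P : Measure Ω) [IsProbabilityMeasure P]
    (F : Filtration ℕ m0) (T : ℕ) (hT : 1 ≤ T) (R : ℝ) (hR : 0 < R) (ξ : ℕ → Ω → ℝ)
    (h : IsMD P F T R ξ) (s t : ℕ) (ht : t ≤ T) (z : ℝ) (hz : 0 ≤ z) :
    P {ω | z ≤ ∑ k ∈ Finset.Ico s t, ξ k ω} ≤ ENNReal.ofReal (Real.exp (-(z ^ 2 / (2 * T * R ^ 2)))) := by
  have hTp : (0 : ℝ) < T := by exact_mod_cast hT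
  set θ : ℝ := z / (T * R ^ 2) with hθ
  have hθ0 : 0 ≤ θ := by positivity
  have hmg := mgf_bound P F T R hR ξ h θ s t ht
  have hSm : Measurable (fun ω => ∑ k ∈ Finset.Ico s t, ξ k ω) :=
    (sum_meas F ξ h.1 s t).mono (F.le t) le_rfl
  have hIntg : Integrable (fun ω => Real.exp (θ * ∑ k ∈ Finset.Ico s t, ξ k ω)) P := by
    refine exp_bdd_integrable P _ (Real.measurable_exp.comp (hSm.const_mul θ))
      (Real.exp (|θ| * (((t - s : ℕ) : ℝ) * R))) fun ω => ?_
    rw [Real.abs_exp, Real.exp_le_exp]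
    refine (le_abs_self _).trans ?_
    rw [abs_mul]
    exact mul_le_mul_of_nonneg_left (sum_bdd ξ R h.2.1 s t ω) (abs_nonneg _)
  have hch := measure_ge_le_exp_mul_mgf (μ := P) (X := fun ω => ∑ k ∈ Finset.Ico s t, ξ k ω)
    z hθ0 hIntg
  rw [← ofReal_measureReal]
  refine ENNReal.ofReal_le_ofReal (hch.trans ?_)
  unfold mgf
  calc Real.exp (-θ * z) * ∫ ω, Real.exp (θ * ∑ k ∈ Finset.Ico s t, ξ k ω) ∂P
      ≤ Real.exp (-θ * z) * Real.exp (T * (θ ^ 2 * R ^ 2 / 2)) := by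
        refine mul_le_mul_of_nonneg_left (hmg.trans ?_) (Real.exp_pos _).le
        rw [Real.exp_le_exp]
        have : (t : ℝ) ≤ T := by exact_mod_cast ht
        exact mul_le_mul_of_nonneg_right this (by positivity)
    _ = _ := by
        rw [← Real.exp_add]; congr 1; rw [hθ]; field_simp; ring

lemma indep_int_zero {Ω : Type*} (G : MeasurableSpace Ω) {m0 : MeasurableSpace Ω} (P : Measure Ω) [IsProbabilityMeasure P]
    {X : Type*} [MeasurableSpace X] (ν : Measure X) [IsProbabilityMeasure ν]
    {V : Type*} [MeasurableSpace V] (hG : G ≤ m0) (x : Ω → X)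
    (hx : Measurable x)
    (hlaw : P.map x = ν) (hind : Indep (MeasurableSpace.comap x inferInstance) G P)
    (v : Ω → V) (hv : Measurable[G] v) (Ψ : V × X → ℝ) (hΨ : Measurable Ψ)
    (h0 : ∀ w, ∫ y, Ψ (w, y) ∂ν = 0) : ∫ ω, Ψ (v ω, x ω) ∂P = 0 := by
  have hv' : Measurable v := hv.mono hG le_rfl
  have hi : IndepFun v x P := by
    rw [IndepFun_iff_Indep]
    exact (indep_of_indep_of_le_right hind hv.comap_le).symm
  have hmap := (indepFun_iff_map_prod_eq_prod_map_map hv'.aemeasurable hx.aemeasurable).1 hi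
  have e : ∫ ω, Ψ (v ω, x ω) ∂P = ∫ q, Ψ q ∂(P.map (fun ω => (v ω, x ω))) := by
    rw [integral_map (hv'.prodMk hx).aemeasurable hΨ.aestronglyMeasurable]
  rw [e, hmap, hlaw]
  have : IsProbabilityMeasure (P.map v) := Measure.isProbabilityMeasure_map hv'.aemeasurable
  by_cases hIntg : Integrable Ψ ((P.map v).prod ν)
  · rw [integral_prod _ hIntg]; simp [h0]
  · exact integral_undef hIntg

/-- pointwise maximal Lagrangian -/
noncomputable def hf {X A : Type*} [Fintype A] [Nonempty A] {d : ℕ} (r : X → A → ℝ)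
    (c : X → A → Fin d → ℝ) (C : Fin d → ℝ) (x : X) (l : Fin d → ℝ) : ℝ :=
  Finset.univ.sup' Finset.univ_nonempty (fun a => r x a - ∑ i, (c x a i - C i) * l i)

/-- centered version -/
noncomputable def gf {X A : Type*} [MeasurableSpace X] [Fintype A] [Nonempty A] {d : ℕ}
    (ν : Measure X) (r : X → A → ℝ)
    (c : X → A → Fin d → ℝ) (C : Fin d → ℝ) (x : X) (l : Fin d → ℝ) : ℝ :=
  hf r c C x l - L ν r c l C

/-- the ℓ1 distance -/
noncomputable def l1 {d : ℕ} (u v : Fin d → ℝ) : ℝ := ∑ i, |u i - v i|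

lemma l1_nonneg {d : ℕ} (u v : Fin d → ℝ) : 0 ≤ l1 u v :=
  Finset.sum_nonneg fun _ _ => abs_nonneg _

lemma l1_comm {d : ℕ} (u v : Fin d → ℝ) : l1 u v = l1 v u :=
  Finset.sum_congr rfl fun _ _ => abs_sub_comm _ _

lemma hf_lip {X A : Type*} [Fintype A] [Nonempty A] {d : ℕ} (r : X → A → ℝ)
    (c : X → A → Fin d → ℝ) (C : Fin d → ℝ) (hcC : ∀ x a i, |c x a i - C i| ≤ 2)
    (x : X) (l l' : Fin d → ℝ) : hf r c C x l - hf r c C x l' ≤ 2 * l1 l l' := by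
  rw [sub_le_iff_le_add']
  refine Finset.sup'_le _ _ fun a _ => ?_
  have h1 : r x a - ∑ i, (c x a i - C i) * l' i ≤ hf r c C x l' :=
    Finset.le_sup' (fun a => r x a - ∑ i, (c x a i - C i) * l' i) (Finset.mem_univ a)
  have h2 : ∑ i, (c x a i - C i) * l' i - ∑ i, (c x a i - C i) * l i ≤ 2 * l1 l l' := by
    rw [← Finset.sum_sub_distrib, l1, Finset.mul_sum]
    refine Finset.sum_le_sum fun i _ => ?_
    rw [← mul_sub]
    refine (le_abs_self _).trans ?_
    rw [abs_mul, abs_sub_comm (l' i)]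
    exact mul_le_mul_of_nonneg_right (hcC x a i) (abs_nonneg _)
  linarith

lemma hf_lip_abs {X A : Type*} [Fintype A] [Nonempty A] {d : ℕ} (r : X → A → ℝ)
    (c : X → A → Fin d → ℝ) (C : Fin d → ℝ) (hcC : ∀ x a i, |c x a i - C i| ≤ 2)
    (x : X) (l l' : Fin d → ℝ) : |hf r c C x l - hf r c C x l'| ≤ 2 * l1 l l' := by
  rw [abs_le]
  have h1 := hf_lip r c C hcC x l l'
  have h2 := hf_lip r c C hcC x l' l
  rw [l1_comm] at h2
  constructor <;> linarith

lemma hf_meas {X A : Type*} [MeasurableSpace X] [Fintype A] [Nonempty A] {d : ℕ} (r : X → A → ℝ)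
    (c : X → A → Fin d → ℝ) (C : Fin d → ℝ)
    (hrm : ∀ a', Measurable fun x' => r x' a')
    (hcm : ∀ a' i, Measurable fun x' => c x' a' i) :
    Measurable (fun q : X × (Fin d → ℝ) => hf r c C q.1 q.2) := by
  have : (fun q : X × (Fin d → ℝ) => hf r c C q.1 q.2) =
      Finset.univ.sup' Finset.univ_nonempty
        (fun (a : A) (q : X × (Fin d → ℝ)) => r q.1 a - ∑ i, (c q.1 a i - C i) * q.2 i) := by
    funext q; simp only [hf, Finset.sup'_apply]
  rw [this]
  refine Finset.measurable_sup' _ fun a _ => ?_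
  refine ((hrm a).comp measurable_fst).sub (Finset.measurable_sum _ fun i _ => ?_)
  exact (((hcm a i).comp measurable_fst).sub_const _).mul ((measurable_pi_apply i).comp measurable_snd)

lemma hf_integrable {X A : Type*} [MeasurableSpace X] [Fintype A] [Nonempty A] {d : ℕ}
    (ν : Measure X) [IsProbabilityMeasure ν] (r : X → A → ℝ)
    (c : X → A → Fin d → ℝ) (C : Fin d → ℝ)
    (hr : ∀ x' a', r x' a' ∈ Set.Icc (0 : ℝ) 1)
    (hcC : ∀ x a i, |c x a i - C i| ≤ 2)
    (hrm : ∀ a', Measurable fun x' => r x' a')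
    (hcm : ∀ a' i, Measurable fun x' => c x' a' i) (l : Fin d → ℝ) :
    Integrable (fun x => hf r c C x l) ν := by
  refine exp_bdd_integrable ν _ ((hf_meas r c C hrm hcm).comp (measurable_id.prodMk measurable_const))
    (1 + 2 * l1 l 0) fun x => ?_
  have h1 := hf_lip_abs r c C hcC x l 0
  have h2 : |hf r c C x 0| ≤ 1 := by
    rw [abs_le]
    simp only [hf, Pi.zero_apply, mul_zero, Finset.sum_const_zero, sub_zero]
    constructor
    · obtain ⟨a⟩ := ‹Nonempty A›
      have := Finset.le_sup' (fun a => r x a) (Finset.mem_univ a)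
      have := (hr x a).1
      linarith
    · exact Finset.sup'_le _ _ fun a _ => (hr x a).2
  have := abs_sub_abs_le_abs_sub (hf r c C x l) (hf r c C x 0)
  linarith

lemma L_eq {X A : Type*} [MeasurableSpace X] [Fintype A] [Nonempty A] {d : ℕ}
    (ν : Measure X) (r : X → A → ℝ)
    (c : X → A → Fin d → ℝ) (C : Fin d → ℝ) (l : Fin d → ℝ) :
    L ν r c l C = ∫ x, hf r c C x l ∂ν := rfl

section gfl
variable {X A : Type*} [MeasurableSpace X] [Fintype A] [Nonempty A] {d : ℕ}
    (ν : Measure X) [IsProbabilityMeasure ν] (r : X → A → ℝ)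
    (c : X → A → Fin d → ℝ) (C : Fin d → ℝ)
    (hr : ∀ x' a', r x' a' ∈ Set.Icc (0 : ℝ) 1)
    (hcC : ∀ x a i, |c x a i - C i| ≤ 2)
    (hrm : ∀ a', Measurable fun x' => r x' a')
    (hcm : ∀ a' i, Measurable fun x' => c x' a' i)

lemma gf_int (hr : ∀ x' a', r x' a' ∈ Set.Icc (0 : ℝ) 1)
    (hcC : ∀ x a i, |c x a i - C i| ≤ 2)
    (hrm : ∀ a', Measurable fun x' => r x' a')
    (hcm : ∀ a' i, Measurable fun x' => c x' a' i) (l : Fin d → ℝ) :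
    Integrable (fun x => gf ν r c C x l) ν ∧ ∫ x, gf ν r c C x l ∂ν = 0 := by
  have hi := hf_integrable ν r c C hr hcC hrm hcm l
  refine ⟨hi.sub (integrable_const _), ?_⟩
  unfold gf
  rw [integral_sub hi (integrable_const _), L_eq]
  simp

lemma gf_lip (hr : ∀ x' a', r x' a' ∈ Set.Icc (0 : ℝ) 1)
    (hcC : ∀ x a i, |c x a i - C i| ≤ 2)
    (hrm : ∀ a', Measurable fun x' => r x' a')
    (hcm : ∀ a' i, Measurable fun x' => c x' a' i) (x : X) (l l' : Fin d → ℝ) :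
    |gf ν r c C x l - gf ν r c C x l'| ≤ 4 * l1 l l' := by
  have h1 := hf_lip_abs r c C hcC x l l'
  have h2 : |L ν r c l C - L ν r c l' C| ≤ 2 * l1 l l' := by
    rw [L_eq, L_eq, ← integral_sub (hf_integrable ν r c C hr hcC hrm hcm l)
      (hf_integrable ν r c C hr hcC hrm hcm l')]
    have := norm_integral_le_of_norm_le_const (μ := ν)
      (f := fun x => hf r c C x l - hf r c C x l') (C := 2 * l1 l l')
      (Filter.Eventually.of_forall fun x => hf_lip_abs r c C hcC x l l')
    simpa using this
  unfold gf
  rw [abs_le] at *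
  constructor <;> linarith [h1.1, h1.2, h2.1, h2.2]

lemma gf_meas (hrm : ∀ a', Measurable fun x' => r x' a')
    (hcm : ∀ a' i, Measurable fun x' => c x' a' i) :
    Measurable (fun q : X × (Fin d → ℝ) => gf ν r c C q.1 q.2) := by
  have h := hf_meas r c C hrm hcm
  refine h.sub ?_
  have h2 : Measurable (fun l : Fin d → ℝ => ∫ x, hf r c C x l ∂ν) := by
    have h3 : StronglyMeasurable (fun q : (Fin d → ℝ) × X => hf r c C q.2 q.1) :=
      (h.comp measurable_swap).stronglyMeasurable
    exact h3.integral_prod_right.measurable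
  exact h2.comp measurable_snd

lemma gf_meas4 (hrm : ∀ a', Measurable fun x' => r x' a')
    (hcm : ∀ a' i, Measurable fun x' => c x' a' i) :
    Measurable (fun q : (ℝ × ℝ × (Fin d → ℝ) × (Fin d → ℝ)) × X =>
      q.1.1 * ((gf ν r c C q.2 q.1.2.2.1 - gf ν r c C q.2 q.1.2.2.2) / q.1.2.1)) := by
  have hgm := gf_meas ν r c C hrm hcm
  have e1 : Measurable (fun q : (ℝ × ℝ × (Fin d → ℝ) × (Fin d → ℝ)) × X => (q.2, q.1.2.2.1)) :=
    measurable_snd.prodMk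
      (measurable_fst.comp (measurable_snd.comp (measurable_snd.comp measurable_fst)))
  have e2 : Measurable (fun q : (ℝ × ℝ × (Fin d → ℝ) × (Fin d → ℝ)) × X => (q.2, q.1.2.2.2)) :=
    measurable_snd.prodMk
      (measurable_snd.comp (measurable_snd.comp (measurable_snd.comp measurable_fst)))
  have e3 : Measurable (fun q : (ℝ × ℝ × (Fin d → ℝ) × (Fin d → ℝ)) × X => q.1.2.1) :=
    measurable_fst.comp (measurable_snd.comp measurable_fst)
  have e4 : Measurable (fun q : (ℝ × ℝ × (Fin d → ℝ) × (Fin d → ℝ)) × X => q.1.1) :=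
    measurable_fst.comp measurable_fst
  have f1 := hgm.comp e1
  have f2 := hgm.comp e2
  exact e4.mul ((f1.sub f2).div e3)

end gfl

lemma isMD_gf {X : Type*} [MeasurableSpace X] {A : Type*} [Fintype A] [Nonempty A] [MeasurableSpace A]
    {d : ℕ} {Ω : Type*} [MeasurableSpace Ω]
    (ν : Measure X) [IsProbabilityMeasure ν] (P : Measure Ω) [IsProbabilityMeasure P]
    (r : X → A → ℝ) (c : X → A → Fin d → ℝ) (T : ℕ)
    (hr : ∀ x' a', r x' a' ∈ Set.Icc (0 : ℝ) 1)
    (C : Fin d → ℝ) (hcC : ∀ x a i, |c x a i - C i| ≤ 2)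
    (hrm : ∀ a', Measurable fun x' => r x' a')
    (hcm : ∀ a' i, Measurable fun x' => c x' a' i)
    (p : Protocol ν r c T P) (θ θ' : ℕ → Ω → Fin d → ℝ) (w : ℕ → Ω → ℝ)
    (hθ : ∀ k, Measurable[p.F k] (θ k)) (hθ' : ∀ k, Measurable[p.F k] (θ' k))
    (hw : ∀ k, Measurable[p.F k] (w k)) (hle : ∀ k ω, l1 (θ k ω) (θ' k ω) ≤ w k ω) :
    IsMD P p.F T 4 (fun k ω => (gf ν r c C (p.x (k + 1) ω) (θ k ω)
      - gf ν r c C (p.x (k + 1) ω) (θ' k ω)) / w k ω) := by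
  have hgm := gf_meas ν r c C hrm hcm
  refine ⟨fun k => ?_, fun k ω => ?_, fun k hk Y hY _ => ?_⟩
  · have hle' := p.F.mono (Nat.le_succ k)
    have h1 : Measurable[p.F (k + 1)] (fun ω => (p.x (k + 1) ω, θ k ω)) :=
      (p.x_adapted (k + 1)).prodMk ((hθ k).mono hle' le_rfl)
    have h2 : Measurable[p.F (k + 1)] (fun ω => (p.x (k + 1) ω, θ' k ω)) :=
      (p.x_adapted (k + 1)).prodMk ((hθ' k).mono hle' le_rfl)
    exact ((hgm.comp h1).sub (hgm.comp h2)).div ((hw k).mono hle' le_rfl)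
  · have h0 := l1_nonneg (θ k ω) (θ' k ω)
    have h1 := gf_lip ν r c C hr hcC hrm hcm (p.x (k + 1) ω) (θ k ω) (θ' k ω)
    have h2 := hle k ω
    rw [abs_div, abs_of_nonneg (h0.trans h2)]
    exact div_le_of_le_mul₀ (h0.trans h2) (by norm_num) (h1.trans (by linarith))
  · have key := indep_int_zero (p.F k) P ν (p.F.le k) (p.x (k + 1))
      ((p.x_adapted (k + 1)).mono (p.F.le _) le_rfl) (p.x_law (k + 1) (by omega) (by omega))
      (by simpa using p.x_indep (k + 1) (by omega) (by omega))
      (fun ω => (Y ω, w k ω, θ k ω, θ' k ω))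
      (hY.prodMk ((hw k).prodMk ((hθ k).prodMk (hθ' k))))
      (fun q => q.1.1 * ((gf ν r c C q.2 q.1.2.2.1 - gf ν r c C q.2 q.1.2.2.2) / q.1.2.1))
      (gf_meas4 ν r c C hrm hcm)
      (by
        intro q
        have i1 := gf_int ν r c C hr hcC hrm hcm q.2.2.1
        have i2 := gf_int ν r c C hr hcC hrm hcm q.2.2.2
        simp only
        rw [integral_const_mul, integral_div, integral_sub i1.1 i2.1, i1.2, i2.2]
        simp)
    exact key

lemma enorm_eq {d : ℕ} (v : Fin d → ℝ) : enorm v = ‖WithLp.toLp 2 v‖ := by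
  rw [EuclideanSpace.norm_eq, enorm]
  simp

lemma enorm_nonneg' {d : ℕ} (v : Fin d → ℝ) : 0 ≤ enorm v := Real.sqrt_nonneg _

lemma enorm_sq {d : ℕ} (v : Fin d → ℝ) : enorm v ^ 2 = ∑ i, v i ^ 2 :=
  Real.sq_sqrt (Finset.sum_nonneg fun _ _ => sq_nonneg _)

lemma enorm_add_le' {d : ℕ} (u v : Fin d → ℝ) : enorm (fun i => u i + v i) ≤ enorm u + enorm v := by
  simp only [enorm_eq]
  exact norm_add_le (WithLp.toLp 2 u) (WithLp.toLp 2 v)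

lemma enorm_mono {d : ℕ} (u v : Fin d → ℝ) (h0 : ∀ i, 0 ≤ u i) (h : ∀ i, u i ≤ v i) :
    enorm u ≤ enorm v := by
  unfold enorm
  exact Real.sqrt_le_sqrt (Finset.sum_le_sum fun i _ => pow_le_pow_left₀ (h0 i) (h i) 2)

lemma enorm_smul' {d : ℕ} (a : ℝ) (ha : 0 ≤ a) (v : Fin d → ℝ) :
    enorm (fun i => a * v i) = a * enorm v := by
  unfold enorm
  simp only [mul_pow]
  rw [← Finset.mul_sum, Real.sqrt_mul (sq_nonneg a), Real.sqrt_sq ha]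

lemma enorm_const {d : ℕ} (a : ℝ) (ha : 0 ≤ a) : enorm (fun _ : Fin d => a) = Real.sqrt d * a := by
  unfold enorm
  rw [Finset.sum_const, nsmul_eq_mul, Finset.card_univ, Fintype.card_fin,
    Real.sqrt_mul (Nat.cast_nonneg d), Real.sqrt_sq ha]

lemma sum_abs_le_enorm {d : ℕ} (v : Fin d → ℝ) : ∑ i, |v i| ≤ Real.sqrt d * enorm v := by
  have h := sq_sum_le_card_mul_sum_sq (s := (Finset.univ : Finset (Fin d))) (f := fun i => |v i|)
  simp only [sq_abs, Finset.card_univ, Fintype.card_fin] at h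
  unfold enorm
  rw [← Real.sqrt_mul (Nat.cast_nonneg d)]
  exact Real.le_sqrt_of_sq_le h

lemma swap_sum (Φ : ℕ → ℕ → ℝ) (t : ℕ) :
    ∑ k ∈ Finset.range (t + 1), Φ k k = ∑ k ∈ Finset.range (t + 1), Φ k 0
      + ∑ s ∈ Finset.range t, ∑ k ∈ Finset.Ico (s + 1) (t + 1), (Φ k (s + 1) - Φ k s) := by
  induction t with
  | zero => simp
  | succ t ih =>
    rw [Finset.sum_range_succ, ih, Finset.sum_range_succ (fun k => Φ k 0) (t + 1)]
    have h1 : ∑ s ∈ Finset.range (t + 1), ∑ k ∈ Finset.Ico (s + 1) (t + 1 + 1), (Φ k (s + 1) - Φ k s)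
        = ∑ s ∈ Finset.range (t + 1), (∑ k ∈ Finset.Ico (s + 1) (t + 1), (Φ k (s + 1) - Φ k s)
          + (Φ (t + 1) (s + 1) - Φ (t + 1) s)) := by
      refine Finset.sum_congr rfl fun s hs => ?_
      rw [Finset.sum_Ico_succ_top (by have := Finset.mem_range.1 hs; omega)]
    rw [h1, Finset.sum_add_distrib, Finset.sum_range_sub (fun s => Φ (t + 1) s),
      Finset.sum_range_succ (fun s => ∑ k ∈ Finset.Ico (s + 1) (t + 1), (Φ k (s + 1) - Φ k s)) t]
    simp
    ring

lemma abel_bound (W Z : ℕ → ℝ) (z : ℝ) (t : ℕ) (h0 : 0 ≤ W 0) (hW : ∀ s, W s ≤ W (s + 1))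
    (hZ : ∀ s ≤ t, ∑ k ∈ Finset.Ico s (t + 1), Z k ≤ z) :
    ∑ k ∈ Finset.range (t + 1), W k * Z k ≤ W t * z := by
  rw [swap_sum (fun k s => W s * Z k) t]
  have h1 : ∑ k ∈ Finset.range (t + 1), W 0 * Z k ≤ W 0 * z := by
    rw [← Finset.mul_sum, Finset.range_eq_Ico]
    exact mul_le_mul_of_nonneg_left (hZ 0 (by omega)) h0
  have h2 : ∑ s ∈ Finset.range t, ∑ k ∈ Finset.Ico (s + 1) (t + 1), (W (s + 1) * Z k - W s * Z k)
      ≤ ∑ s ∈ Finset.range t, (W (s + 1) - W s) * z := by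
    refine Finset.sum_le_sum fun s hs => ?_
    simp only [← sub_mul]
    rw [← Finset.mul_sum]
    exact mul_le_mul_of_nonneg_left (hZ (s + 1) (by have := Finset.mem_range.1 hs; omega))
      (sub_nonneg.2 (hW s))
  rw [← Finset.sum_mul, Finset.sum_range_sub] at h2
  linarith

/-- one step of the coupling between the two dual sequences (scalar) -/
lemma step_f (m f w e : ℝ) (hf : 0 ≤ f) (he : 0 ≤ e) :
    0 ≤ max (m + w) 0 - max (m - f + w - e) 0 ∧
      max (m + w) 0 - max (m - f + w - e) 0 ≤ f + e := by
  constructor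
  · have : max (m - f + w - e) 0 ≤ max (m + w) 0 := max_le_max (by linarith) le_rfl
    linarith
  · have : max (m + w) 0 ≤ max (m - f + w - e) 0 + (f + e) := by
      refine max_le ?_ ?_
      · linarith [le_max_left (m - f + w - e) 0]
      · linarith [le_max_right (m - f + w - e) 0]
    linarith

lemma f_props (T : ℕ) (γ : ℝ) (hγ : 0 < γ) (lam mu cl ct eps : ℕ → ℝ) (C : ℝ)
    (l0 : lam 0 = 0) (m0 : mu 0 = 0)
    (lu : ∀ k < T, lam (k + 1) = max (lam k + γ * (cl k - C)) 0)
    (mu' : ∀ k < T, mu (k + 1) = max (mu k + γ * (ct k - C)) 0)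
    (h1 : ∀ k < T, cl k ≤ ct k) (h2 : ∀ k < T, ct k - 2 * eps k ≤ cl k) :
    ∀ t ≤ T, 0 ≤ mu t - lam t ∧ mu t - lam t ≤ 2 * γ * ∑ k ∈ Finset.range t, eps k ∧
      ∑ s ∈ Finset.range t, |(mu (s + 1) - lam (s + 1)) - (mu s - lam s)|
        ≤ 4 * γ * (∑ k ∈ Finset.range t, eps k) - (mu t - lam t) := by
  intro t
  induction t with
  | zero => intro _; simp [l0, m0]
  | succ t ih =>
    intro ht
    obtain ⟨a1, a2, a3⟩ := ih (by omega)
    have b1 := h1 t (by omega)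
    have b2 := h2 t (by omega)
    have hs := step_f (mu t) (mu t - lam t) (γ * (ct t - C)) (γ * (ct t - cl t)) a1
      (mul_nonneg hγ.le (by linarith))
    have e : mu t - (mu t - lam t) + γ * (ct t - C) - γ * (ct t - cl t) = lam t + γ * (cl t - C) := by
      ring
    rw [e, ← lu t (by omega), ← mu' t (by omega)] at hs
    have b3 : γ * (ct t - cl t) ≤ 2 * γ * eps t := by
      have := mul_le_mul_of_nonneg_left (show ct t - cl t ≤ 2 * eps t by linarith) hγ.le
      linarith
    have b4 : 0 ≤ γ * (ct t - cl t) := mul_nonneg hγ.le (by linarith)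
    refine ⟨hs.1, ?_, ?_⟩
    · rw [Finset.sum_range_succ, mul_add]; linarith
    · rw [Finset.sum_range_succ, Finset.sum_range_succ, mul_add]
      have : |(mu (t + 1) - lam (t + 1)) - (mu t - lam t)|
          ≤ 4 * γ * eps t + (mu t - lam t) - (mu (t + 1) - lam (t + 1)) := by
        rw [abs_le]; constructor <;> linarith
      linarith

lemma floor_diff (η a b : ℝ) (hη : 0 < η) (ha : 0 ≤ a) (hb : 0 ≤ b) :
    |η * (⌊a / η⌋₊ : ℝ) - η * (⌊b / η⌋₊ : ℝ)| ≤ |a - b| + η := by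
  have h1 := Nat.floor_le (div_nonneg ha hη.le)
  have h2 := Nat.floor_le (div_nonneg hb hη.le)
  have h3 := (Nat.lt_floor_add_one (a / η)).le
  have h4 := (Nat.lt_floor_add_one (b / η)).le
  have e1 : η * (a / η) = a := by field_simp
  have e2 : η * (b / η) = b := by field_simp
  have g1 := mul_le_mul_of_nonneg_left h1 hη.le
  have g2 := mul_le_mul_of_nonneg_left h2 hη.le
  have g3 := mul_le_mul_of_nonneg_left h3 hη.le
  have g4 := mul_le_mul_of_nonneg_left h4 hη.le
  rw [e1] at g1 g3
  rw [e2] at g2 g4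
  have := abs_le.1 (le_refl |a - b|)
  rw [abs_le]; constructor <;> linarith

lemma floor_err (η a : ℝ) (hη : 0 < η) (ha : 0 ≤ a) : |η * (⌊a / η⌋₊ : ℝ) - a| ≤ η := by
  have h1 := Nat.floor_le (div_nonneg ha hη.le)
  have h3 := (Nat.lt_floor_add_one (a / η)).le
  have e1 : η * (a / η) = a := by field_simp
  have g1 := mul_le_mul_of_nonneg_left h1 hη.le
  have g3 := mul_le_mul_of_nonneg_left h3 hη.le
  rw [e1] at g1 g3
  rw [abs_le]; constructor <;> linarith

lemma partII {d : ℕ} (T : ℕ) (hT : 1 ≤ T) (γ : ℝ) (hγ : 0 < γ)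
    (g : ℕ → (Fin d → ℝ) → ℝ) (hg : ∀ k l l', |g k l - g k l'| ≤ 4 * l1 l l')
    (lam mu cl ct : ℕ → Fin d → ℝ) (eps : ℕ → ℝ) (C : Fin d → ℝ)
    (l0 : ∀ i, lam 0 i = 0) (m0 : ∀ i, mu 0 i = 0)
    (lu : ∀ k < T, ∀ i, lam (k + 1) i = max (lam k i + γ * (cl k i - C i)) 0)
    (mu' : ∀ k < T, ∀ i, mu (k + 1) i = max (mu k i + γ * (ct k i - C i)) 0)
    (h1 : ∀ k < T, ∀ i, cl k i ≤ ct k i) (h2 : ∀ k < T, ∀ i, ct k i - 2 * eps k ≤ cl k i)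
    (he : ∀ k, 0 ≤ eps k) (he1 : ∀ k, eps k ≤ 1) (z β : ℝ) (hz : 0 ≤ z)
    (hβ : ∑ k ∈ Finset.range T, eps k ≤ β)
    (hII : ∀ s < T, ∀ t < T, ∀ u v : Fin d → ℕ, (∀ i, u i ≤ 2 * T ^ 2) → (∀ i, v i ≤ 2 * T ^ 2) →
      ∑ k ∈ Finset.Ico s (t + 1), (g k (fun i => mu k i - γ / T * u i)
        - g k (fun i => mu k i - γ / T * v i)) / l1 (fun i => γ / T * (u i : ℝ)) (fun i => γ / T * (v i : ℝ))
        ≤ z) (t : ℕ) (ht : t < T) :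
    ∑ k ∈ Finset.range (t + 1), (g k (mu k) - g k (lam k))
      ≤ d * γ * (4 * β + 1) * z + 4 * d * γ := by
  have hTp : (0 : ℝ) < T := by exact_mod_cast hT
  set η : ℝ := γ / T with hη
  have hηp : 0 < η := by positivity
  have fp := fun i => f_props T γ hγ (fun k => lam k i) (fun k => mu k i) (fun k => cl k i)
    (fun k => ct k i) eps (C i) (l0 i) (m0 i) (fun k hk => lu k hk i) (fun k hk => mu' k hk i)
    (fun k hk => h1 k hk i) (fun k hk => h2 k hk i)
  set u : ℕ → Fin d → ℕ := fun s i => ⌊(mu s i - lam s i) / η⌋₊ with hu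
  have epsum : ∀ t ≤ T, ∑ k ∈ Finset.range t, eps k ≤ β := fun t ht =>
    (Finset.sum_le_sum_of_subset_of_nonneg (Finset.range_mono ht) (fun k _ _ => he k)).trans hβ
  have epsT : ∀ t ≤ T, ∑ k ∈ Finset.range t, eps k ≤ T := by
    intro t ht
    refine (Finset.sum_le_sum fun k _ => he1 k).trans ?_
    simpa using ht
  have hub : ∀ s ≤ T, ∀ i, u s i ≤ 2 * T ^ 2 := by
    intro s hs i
    refine Nat.floor_le_of_le ?_
    rw [div_le_iff₀ hηp]
    refine (fp i s hs).2.1.trans ?_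
    have := mul_le_mul_of_nonneg_left (epsT s hs) (show 0 ≤ 2 * γ by positivity)
    refine this.trans (le_of_eq ?_)
    rw [hη]; push_cast; field_simp
  -- rounding
  have hround : ∀ k < T, g k (mu k) - g k (lam k)
      ≤ (g k (mu k) - g k (fun i => mu k i - η * u k i)) + 4 * d * η := by
    intro k hk
    have h := (abs_le.1 (hg k (fun i => mu k i - η * u k i) (lam k))).2
    have hl : l1 (fun i => mu k i - η * u k i) (lam k) ≤ d * η := by
      unfold l1
      refine (Finset.sum_le_sum (g := fun _ => η) fun i _ => ?_).trans (by simp)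
      have := floor_err η (mu k i - lam k i) hηp (fp i k hk.le).1
      rw [← abs_neg] at this
      refine le_trans (le_of_eq ?_) this
      congr 1; simp only [hu]; ring
    linarith
  have hsum : ∑ k ∈ Finset.range (t + 1), (g k (mu k) - g k (lam k))
      ≤ ∑ k ∈ Finset.range (t + 1), (g k (mu k) - g k (fun i => mu k i - η * u k i)) + 4 * d * γ := by
    calc _ ≤ ∑ k ∈ Finset.range (t + 1),
          ((g k (mu k) - g k (fun i => mu k i - η * u k i)) + 4 * d * η) :=
          Finset.sum_le_sum fun k hk => hround k (by have := Finset.mem_range.1 hk; omega)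
      _ = ∑ k ∈ Finset.range (t + 1), (g k (mu k) - g k (fun i => mu k i - η * u k i))
          + ((t + 1 : ℕ) : ℝ) * (4 * d * η) := by
          rw [Finset.sum_add_distrib]; simp
      _ ≤ _ := by
          have h3 : ((t + 1 : ℕ) : ℝ) ≤ T := by exact_mod_cast ht
          have h4 := mul_le_mul_of_nonneg_right h3 (show 0 ≤ 4 * d * η by positivity)
          have h5 : (T : ℝ) * (4 * d * η) = 4 * d * γ := by rw [hη]; field_simp
          linarith
  refine hsum.trans ?_
  have hsw := swap_sum (fun k s => - g k (fun i => mu k i - η * u s i)) t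
  have hu0 : ∀ k, g k (fun i => mu k i - η * u 0 i) = g k (mu k) := by
    intro k; congr 1; funext i; simp [hu, l0, m0]
  simp only [hu0] at hsw
  have hdiff : ∑ k ∈ Finset.range (t + 1), (g k (mu k) - g k (fun i => mu k i - η * u k i))
      = ∑ s ∈ Finset.range t, ∑ k ∈ Finset.Ico (s + 1) (t + 1),
        (g k (fun i => mu k i - η * u s i) - g k (fun i => mu k i - η * u (s + 1) i)) := by
    simp only [sub_eq_add_neg (g _ (mu _)), Finset.sum_add_distrib]
    rw [hsw, ← add_assoc, ← Finset.sum_add_distrib]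
    simp only [add_neg_cancel, Finset.sum_const_zero, zero_add]
    refine Finset.sum_congr rfl fun s _ => Finset.sum_congr rfl fun k _ => ?_
    ring
  rw [hdiff]
  have hin : ∀ s ∈ Finset.range t, ∑ k ∈ Finset.Ico (s + 1) (t + 1),
        (g k (fun i => mu k i - η * u s i) - g k (fun i => mu k i - η * u (s + 1) i))
      ≤ l1 (fun i => η * (u s i : ℝ)) (fun i => η * (u (s + 1) i : ℝ)) * z := by
    intro s hs
    have hs' := Finset.mem_range.1 hs
    have h := hII (s + 1) (by omega) t ht (u s) (u (s + 1)) (hub s (by omega)) (hub (s + 1) (by omega))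
    rw [← Finset.sum_div] at h
    set l := l1 (fun i => η * (u s i : ℝ)) (fun i => η * (u (s + 1) i : ℝ)) with hl
    have hl0 : 0 ≤ l := l1_nonneg _ _
    rcases hl0.eq_or_lt with h00 | hpos
    · rw [← h00, zero_mul]
      refine Finset.sum_nonpos fun k _ => ?_
      have h6 := (abs_le.1 (hg k (fun i => mu k i - η * u s i) (fun i => mu k i - η * u (s + 1) i))).2
      have h7 : l1 (fun i => mu k i - η * u s i) (fun i => mu k i - η * u (s + 1) i) = l := by
        rw [hl, l1_comm]; unfold l1
        refine Finset.sum_congr rfl fun i _ => ?_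
        congr 1; ring
      rw [h7, ← h00] at h6
      linarith
    · rw [div_le_iff₀ hpos] at h
      linarith
  refine add_le_add_left ((Finset.sum_le_sum hin).trans ?_) _
  rw [← Finset.sum_mul]
  refine mul_le_mul_of_nonneg_right ?_ hz
  unfold l1
  rw [Finset.sum_comm]
  have hi : ∀ i : Fin d, ∑ s ∈ Finset.range t, |η * (u s i : ℝ) - η * (u (s + 1) i : ℝ)|
      ≤ γ * (4 * β + 1) := by
    intro i
    have h8 : ∀ s ∈ Finset.range t, |η * (u s i : ℝ) - η * (u (s + 1) i : ℝ)|
        ≤ |(mu (s + 1) i - lam (s + 1) i) - (mu s i - lam s i)| + η := by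
      intro s hs
      have hs' := Finset.mem_range.1 hs
      rw [abs_sub_comm]
      exact floor_diff η _ _ hηp (fp i (s + 1) (by omega)).1 (fp i s (by omega)).1
    refine (Finset.sum_le_sum h8).trans ?_
    rw [Finset.sum_add_distrib]
    have h9 := (fp i t ht.le).2.2
    have h10 := (fp i t ht.le).1
    have h11 := mul_le_mul_of_nonneg_left (epsum t ht.le) (show 0 ≤ 4 * γ by positivity)
    have h12 : ∑ s ∈ Finset.range t, η ≤ γ := by
      rw [Finset.sum_const, Finset.card_range, nsmul_eq_mul]
      have : (t : ℝ) ≤ T := by exact_mod_cast ht.le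
      have h13 := mul_le_mul_of_nonneg_right this hηp.le
      have : (T : ℝ) * η = γ := by rw [hη]; field_simp
      linarith
    linarith
  refine (Finset.sum_le_sum fun i _ => hi i).trans (le_of_eq ?_)
  simp; ring

lemma quad_final (n u M : ℝ) (hn : 0 ≤ n) (hu : 0 ≤ u) (hM : M = n + 1 + 12 * u) :
    n ^ 2 + 4 * u + 4 * u * n + 6 * u * M + 60 * u ^ 2 ≤ M ^ 2 := by
  subst hM
  nlinarith [mul_nonneg hn hu, sq_nonneg u]

set_option maxHeartbeats 2000000 in
lemma core {d : ℕ} (hd : 0 < d) (T : ℕ) (hT : 1 ≤ T) (γ : ℝ) (hγ : 0 < γ)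
    (g : ℕ → (Fin d → ℝ) → ℝ) (hg : ∀ k l l', |g k l - g k l'| ≤ 4 * l1 l l')
    (lam mu cl ct : ℕ → Fin d → ℝ) (eps : ℕ → ℝ) (C : Fin d → ℝ)
    (l0 : ∀ i, lam 0 i = 0) (m0 : ∀ i, mu 0 i = 0)
    (lu : ∀ k < T, ∀ i, lam (k + 1) i = max (lam k i + γ * (cl k i - C i)) 0)
    (mu' : ∀ k < T, ∀ i, mu (k + 1) i = max (mu k i + γ * (ct k i - C i)) 0)
    (h1 : ∀ k < T, ∀ i, cl k i ≤ ct k i) (h2 : ∀ k < T, ∀ i, ct k i - 2 * eps k ≤ cl k i)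
    (hD : ∀ k < T, ∀ i, |cl k i - C i| ≤ 2)
    (he : ∀ k, 0 ≤ eps k) (he1 : ∀ k, eps k ≤ 1) (z1 z U : ℝ) (hz1 : 0 ≤ z1) (hz : 0 ≤ z)
    (hβ : ∑ k ∈ Finset.range T, eps k ≤ U) (hzU1 : Real.sqrt d * z1 ≤ 3 * U)
    (hzU : z ≤ 4.9 * U) (hU : 4 * (d : ℝ) * T ≤ U ^ 2) (hU0 : 0 ≤ U)
    (ls : Fin d → ℝ) (hls : ∀ i, 0 ≤ ls i)
    (hround : ∀ k < T, ∑ i, (cl k i - C i) * (lam k i - ls i)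
      ≤ g k ls - g k (lam k) + 2 * eps k * (1 + ∑ i, ls i))
    (W : ℕ → ℝ) (hW0 : W 0 = l1 ls (mu 0)) (hW : ∀ k, W (k + 1) = max (W k) (l1 ls (mu (k + 1))))
    (hI : ∀ s < T, ∀ t < T, ∑ k ∈ Finset.Ico s (t + 1), (g k ls - g k (mu k)) / W k ≤ z1)
    (hII : ∀ s < T, ∀ t < T, ∀ u v : Fin d → ℕ, (∀ i, u i ≤ 2 * T ^ 2) → (∀ i, v i ≤ 2 * T ^ 2) →
      ∑ k ∈ Finset.Ico s (t + 1), (g k (fun i => mu k i - γ / T * u i)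
        - g k (fun i => mu k i - γ / T * v i)) / l1 (fun i => γ / T * (u i : ℝ)) (fun i => γ / T * (v i : ℝ))
        ≤ z) (t : ℕ) (ht : t ≤ T) :
    enorm (lam t) ≤ 1 + 2 * enorm ls + 12 * (γ * Real.sqrt d * U) := by
  set n := enorm ls with hn
  set sd := Real.sqrt d with hsd
  have hsd0 : 0 ≤ sd := Real.sqrt_nonneg _
  have hsd2 : sd ^ 2 = d := Real.sq_sqrt (Nat.cast_nonneg d)
  have hd1 : (1 : ℝ) ≤ d := by exact_mod_cast hd
  have hT1 : (1 : ℝ) ≤ T := by exact_mod_cast hT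
  have hsd1 : 1 ≤ sd := by rw [hsd]; exact Real.one_le_sqrt.2 hd1
  set u := γ * sd * U with hu
  have hu0 : 0 ≤ u := by positivity
  have hn0 : 0 ≤ n := enorm_nonneg' _
  have hU4 : 4 ≤ U ^ 2 := by
    have : (1 : ℝ) ≤ d * T := one_le_mul_of_one_le_of_one_le hd1 hT1
    linarith
  have hU2 : 2 ≤ U := by nlinarith
  obtain ⟨M, hM⟩ : ∃ M, M = n + 1 + 12 * u := ⟨_, rfl⟩
  have hM0 : 0 ≤ M := by rw [hM]; positivity
  have hls1 : ∑ i, ls i ≤ sd * n := by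
    have := sum_abs_le_enorm ls
    simpa only [abs_of_nonneg (hls _)] using this
  have fp := fun i => f_props T γ hγ (fun k => lam k i) (fun k => mu k i) (fun k => cl k i)
    (fun k => ct k i) eps (C i) (l0 i) (m0 i) (fun k hk => lu k hk i) (fun k hk => mu' k hk i)
    (fun k hk => h1 k hk i) (fun k hk => h2 k hk i)
  have epsum : ∀ t ≤ T, ∑ k ∈ Finset.range t, eps k ≤ U := fun t ht =>
    (Finset.sum_le_sum_of_subset_of_nonneg (Finset.range_mono ht) (fun k _ _ => he k)).trans hβ
  -- one-step inequality
  have hstep : ∀ k < T, ∑ i, (lam (k + 1) i - ls i) ^ 2 ≤ ∑ i, (lam k i - ls i) ^ 2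
      + 2 * γ * ∑ i, (cl k i - C i) * (lam k i - ls i) + 4 * d * γ ^ 2 := by
    intro k hk
    have hi : ∀ i ∈ Finset.univ, (lam (k + 1) i - ls i) ^ 2 ≤ (lam k i - ls i) ^ 2
        + 2 * γ * ((cl k i - C i) * (lam k i - ls i)) + 4 * γ ^ 2 := by
      intro i _
      have a1 : (max (lam k i + γ * (cl k i - C i)) 0 - ls i) ^ 2
          ≤ (lam k i + γ * (cl k i - C i) - ls i) ^ 2 := by
        rcases le_total 0 (lam k i + γ * (cl k i - C i)) with h | h
        · rw [max_eq_left h]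
        · rw [max_eq_right h]
          have := hls i
          nlinarith
      have a2 : (cl k i - C i) ^ 2 ≤ 4 := by
        have := sq_le_sq' (abs_le.1 (hD k hk i)).1 (abs_le.1 (hD k hk i)).2
        linarith
      rw [lu k hk i]
      refine a1.trans ?_
      have a3 := mul_le_mul_of_nonneg_left a2 (sq_nonneg γ)
      nlinarith
    refine (Finset.sum_le_sum hi).trans (le_of_eq ?_)
    rw [Finset.sum_add_distrib, Finset.sum_add_distrib, ← Finset.mul_sum]
    simp; ring
  have htel : ∀ t ≤ T, ∑ i, (lam t i - ls i) ^ 2 ≤ n ^ 2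
      + 2 * γ * ∑ k ∈ Finset.range t, (g k ls - g k (lam k))
      + 4 * γ * (∑ k ∈ Finset.range t, eps k) * (1 + sd * n) + t * (4 * d * γ ^ 2) := by
    intro t
    induction t with
    | zero => intro _; simp [l0, hn, enorm_sq]
    | succ t ih =>
      intro ht
      have a1 := ih (by omega)
      have a2 := hstep t (by omega)
      have a3 := mul_le_mul_of_nonneg_left (hround t (by omega)) (show 0 ≤ 2 * γ by positivity)
      have a4 : 4 * γ * eps t * (1 + ∑ i, ls i) ≤ 4 * γ * eps t * (1 + sd * n) :=
        mul_le_mul_of_nonneg_left (by linarith) (mul_nonneg (by positivity) (he t))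
      rw [Finset.sum_range_succ, Finset.sum_range_succ]
      push_cast
      linarith
  have claim : ∀ t ≤ T, enorm (fun i => lam t i - ls i) ≤ M := by
    intro t
    induction t using Nat.strong_induction_on with
    | _ t IH =>
    intro ht
    rcases t with _ | t
    · have : enorm (fun i => lam 0 i - ls i) = n := by
        simp [enorm, l0, hn]
      rw [this, hM]; linarith
    · have hWt : ∀ k ≤ t, l1 ls (mu k) ≤ sd * M + 2 * d * γ * U := by
        intro k hk
        have b1 := IH k (by omega) (by omega)
        have b2 : l1 ls (mu k) ≤ ∑ i, |lam k i - ls i| + ∑ i : Fin d, 2 * γ * U := by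
          unfold l1
          rw [← Finset.sum_add_distrib]
          refine Finset.sum_le_sum fun i _ => ?_
          have c1 := (fp i k (by omega)).1
          have c2 := (fp i k (by omega)).2.1
          have c3 := mul_le_mul_of_nonneg_left (epsum k (by omega)) (show 0 ≤ 2 * γ by positivity)
          have c4 := abs_le.1 (le_refl |lam k i - ls i|)
          rw [abs_le]; constructor <;> linarith
        have b3 := sum_abs_le_enorm (fun i => lam k i - ls i)
        have b4 := mul_le_mul_of_nonneg_left b1 hsd0
        simp only [Finset.sum_const, Finset.card_univ, Fintype.card_fin, nsmul_eq_mul] at b2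
        linarith
      have hWb : ∀ k ≤ t, W k ≤ sd * M + 2 * d * γ * U := by
        intro k
        induction k with
        | zero => intro hk; rw [hW0]; exact hWt 0 hk
        | succ k ih => intro hk; rw [hW]; exact max_le (ih (by omega)) (hWt _ hk)
      have hWpos : ∀ k, l1 ls (mu k) ≤ W k := by
        intro k
        rcases k with _ | k
        · rw [hW0]
        · rw [hW]; exact le_max_right _ _
      have p1 : ∑ k ∈ Finset.range (t + 1), (g k ls - g k (mu k)) ≤ W t * z1 := by
        have := abel_bound W (fun k => (g k ls - g k (mu k)) / W k) z1 t
          ((l1_nonneg _ _).trans (hWpos 0)) (fun s => by rw [hW]; exact le_max_left _ _)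
          (fun s hs => hI s (by omega) t (by omega))
        refine le_trans (le_of_eq ?_) this
        refine Finset.sum_congr rfl fun k _ => ?_
        rcases eq_or_ne (W k) 0 with h | h
        · have c1 := hg k ls (mu k)
          have c2 := hWpos k
          rw [h] at c2
          have c3 := abs_nonneg (g k ls - g k (mu k))
          have : |g k ls - g k (mu k)| = 0 := by linarith
          rw [abs_eq_zero] at this
          simp [this]
        · field_simp
      have p1' : W t * z1 ≤ (M + 2 * u) * (3 * U) := by
        have c1 := mul_le_mul_of_nonneg_right (hWb t le_rfl) hz1
        have c2 : (sd * M + 2 * d * γ * U) * z1 = (M + 2 * u) * (sd * z1) := by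
          rw [← hsd2, hu]; ring
        have c3 := mul_le_mul_of_nonneg_left hzU1 (show 0 ≤ M + 2 * u by positivity)
        linarith
      have p2 := partII T hT γ hγ g hg lam mu cl ct eps C l0 m0 lu mu' h1 h2 he he1 z U hz hβ hII t
        (by omega)
      have p2' : d * γ * (4 * U + 1) * z + 4 * d * γ ≤ 23.5 * (d * γ * U ^ 2) := by
        have c0 : 0 ≤ d * γ := by positivity
        have c1 : (4 * U + 1) * z ≤ (4.5 * U) * (4.9 * U) :=
          mul_le_mul (by linarith) hzU hz (by positivity)
        have c2 : (4 * U + 1) * z + 4 ≤ 23.5 * U ^ 2 := by nlinarith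
        have := mul_le_mul_of_nonneg_left c2 c0
        linarith
      have p3 := htel (t + 1) ht
      have p4 : ∑ k ∈ Finset.range (t + 1), (g k ls - g k (lam k))
          ≤ (M + 2 * u) * (3 * U) + 23.5 * (d * γ * U ^ 2) := by
        have : ∑ k ∈ Finset.range (t + 1), (g k ls - g k (lam k))
            = ∑ k ∈ Finset.range (t + 1), (g k ls - g k (mu k))
              + ∑ k ∈ Finset.range (t + 1), (g k (mu k) - g k (lam k)) := by
          rw [← Finset.sum_add_distrib]
          exact Finset.sum_congr rfl fun k _ => by ring
        linarith
      have p5 := mul_le_mul_of_nonneg_left p4 (show 0 ≤ 2 * γ by positivity)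
      have hγU : γ * U ≤ u := by
        rw [hu]; nlinarith [mul_nonneg hγ.le hU0]
      have q1 : 2 * γ * ((M + 2 * u) * (3 * U) + 23.5 * (d * γ * U ^ 2))
          ≤ 6 * u * M + 12 * u ^ 2 + 47 * u ^ 2 := by
        have e1 : (d : ℝ) * γ * U ^ 2 * γ = u ^ 2 := by rw [hu, ← hsd2]; ring
        have e2 := mul_le_mul_of_nonneg_right hγU (show 0 ≤ 6 * (M + 2 * u) by positivity)
        linarith
      have q2 : 4 * γ * (∑ k ∈ Finset.range (t + 1), eps k) * (1 + sd * n) ≤ 4 * u + 4 * u * n := by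
        have e1 : 4 * γ * (∑ k ∈ Finset.range (t + 1), eps k) * (1 + sd * n)
            ≤ 4 * γ * U * (1 + sd * n) :=
          mul_le_mul_of_nonneg_right (mul_le_mul_of_nonneg_left (epsum _ ht) (by positivity))
            (by positivity)
        have e2 : 4 * γ * U * (1 + sd * n) = 4 * (γ * U) + 4 * u * n := by rw [hu]; ring
        linarith
      have q3 : ((t + 1 : ℕ) : ℝ) * (4 * d * γ ^ 2) ≤ u ^ 2 := by
        have e1 : ((t + 1 : ℕ) : ℝ) ≤ T := by exact_mod_cast ht
        have e2 := mul_le_mul_of_nonneg_right e1 (show 0 ≤ 4 * d * γ ^ 2 by positivity)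
        have e3 := mul_le_mul_of_nonneg_left hU (sq_nonneg γ)
        have e4 : γ ^ 2 * U ^ 2 ≤ u ^ 2 := by
          rw [← mul_pow]; exact pow_le_pow_left₀ (by positivity) hγU 2
        linarith
      have q4 := quad_final n u M hn0 hu0 hM
      have : ∑ i, (lam (t + 1) i - ls i) ^ 2 ≤ M ^ 2 := by linarith
      unfold enorm
      exact Real.sqrt_le_iff.2 ⟨hM0, this⟩
  have h3 := claim t ht
  have h4 := enorm_add_le' (fun i => lam t i - ls i) ls
  simp only [sub_add_cancel] at h4
  have h5 : enorm (fun i => lam t i) = enorm (lam t) := rfl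
  linarith

section proc
variable {X : Type*} [MeasurableSpace X] {A : Type*} [Fintype A] [Nonempty A] [MeasurableSpace A]
    {d : ℕ} {Ω : Type*} [MeasurableSpace Ω]
    {ν : Measure X} {P : Measure Ω}
    {r : X → A → ℝ} {c : X → A → Fin d → ℝ} {T : ℕ}

/-- information available just before the reward and cost of round `k+1` are drawn -/
def preF (p : Protocol ν r c T P) (k : ℕ) : MeasurableSpace Ω :=
  (p.F k : MeasurableSpace Ω) ⊔ MeasurableSpace.comap (p.x (k + 1)) inferInstance
        ⊔ MeasurableSpace.comap (p.act (k + 1)) inferInstance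

/-- a measurable version of the expected costs -/
noncomputable def mc (p : Protocol ν r c T P) (k : ℕ) (ω : Ω) (i : Fin d) : ℝ :=
  min (max ((P[fun ω => p.cost (k + 1) ω i | preF p k]) ω) (-1)) 1

/-- surrogate (measurable) dual iterates -/
noncomputable def mus (p : Protocol ν r c T P) (C : Fin d → ℝ) (γ : ℝ) : ℕ → Ω → Fin d → ℝ
  | 0, _, _ => 0
  | k + 1, ω, i => max (mus p C γ k ω i + γ * (mc p k ω i - C i)) 0

/-- running maximum of the ℓ1 distances -/
noncomputable def Wp (p : Protocol ν r c T P) (C : Fin d → ℝ) (γ : ℝ) (ls : Fin d → ℝ) :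
    ℕ → Ω → ℝ
  | 0, ω => l1 ls (mus p C γ 0 ω)
  | k + 1, ω => max (Wp p C γ ls k ω) (l1 ls (mus p C γ (k + 1) ω))

lemma preF_le (p : Protocol ν r c T P) (k : ℕ) : preF p k ≤ p.F (k + 1) :=
  sup_le (sup_le (p.F.mono (Nat.le_succ k)) (p.x_adapted (k + 1)).comap_le)
    (p.act_adapted (k + 1)).comap_le

lemma le_preF (p : Protocol ν r c T P) (k : ℕ) : p.F k ≤ preF p k :=
  le_sup_of_le_left le_sup_left

lemma mc_meas (p : Protocol ν r c T P) (k : ℕ) (i : Fin d) :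
    Measurable[p.F (k + 1)] (fun ω => mc p k ω i) := by
  have h : Measurable[p.F (k + 1)] (P[fun ω => p.cost (k + 1) ω i | preF p k]) :=
    (stronglyMeasurable_condExp.measurable).mono (preF_le p k) le_rfl
  exact (h.max measurable_const).min measurable_const

lemma mc_mem (p : Protocol ν r c T P) (k : ℕ) (ω : Ω) (i : Fin d) :
    -1 ≤ mc p k ω i ∧ mc p k ω i ≤ 1 :=
  ⟨le_min (le_max_right _ _) (by norm_num), min_le_right _ _⟩

lemma mc_ae (p : Protocol ν r c T P) (hc : ∀ x' a' i, c x' a' i ∈ Set.Icc (-1 : ℝ) 1)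
    (k : ℕ) (hk : k < T) (i : Fin d) :
    (∀ᵐ ω ∂P, mc p k ω i = c (p.x (k + 1) ω) (p.act (k + 1) ω) i) ∧
    (∀ᵐ ω ∂P, mc p k ω i = (P[fun ω => p.cost (k + 1) ω i | preF p k]) ω) := by
  have h := p.cost_condExp (k + 1) (by omega) (by omega) i
  simp only [Nat.add_sub_cancel] at h
  have h1 : ∀ᵐ ω ∂P, (P[fun ω => p.cost (k + 1) ω i | preF p k]) ω
      = c (p.x (k + 1) ω) (p.act (k + 1) ω) i := h
  have key : ∀ᵐ ω ∂P, mc p k ω i = c (p.x (k + 1) ω) (p.act (k + 1) ω) i := by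
    filter_upwards [h1] with ω hω
    unfold mc
    rw [hω, max_eq_left (hc _ _ _).1, min_eq_left (hc _ _ _).2]
  refine ⟨key, ?_⟩
  filter_upwards [h1, key] with ω a b
  rw [a, b]

lemma mus_meas (p : Protocol ν r c T P) (C : Fin d → ℝ) (γ : ℝ) (k : ℕ) :
    Measurable[p.F k] (mus p C γ k) := by
  induction k with
  | zero => exact measurable_const
  | succ k ih =>
    refine @measurable_pi_lambda Ω (Fin d) (fun _ => ℝ) (p.F (k + 1)) _ _ fun i => ?_
    have h1 : Measurable[p.F (k + 1)] (fun ω => mus p C γ k ω i) :=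
      ((measurable_pi_apply i).comp ih).mono (p.F.mono (Nat.le_succ k)) le_rfl
    exact (h1.add (((mc_meas p k i).sub_const _).const_mul γ)).max measurable_const

lemma l1_meas {m : MeasurableSpace Ω} (f : Ω → Fin d → ℝ) (hf : Measurable f) (u : Fin d → ℝ) :
    Measurable (fun ω => l1 u (f ω)) := by
  unfold l1
  refine Finset.measurable_sum _ fun i _ => ?_
  have : Measurable (fun ω => u i - f ω i) := ((measurable_pi_apply i).comp hf).const_sub _
  exact this.abs

lemma Wp_meas (p : Protocol ν r c T P) (C : Fin d → ℝ) (γ : ℝ) (ls : Fin d → ℝ) (k : ℕ) :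
    Measurable[p.F k] (Wp p C γ ls k) := by
  induction k with
  | zero => exact l1_meas (m := p.F 0) _ (mus_meas p C γ 0) ls
  | succ k ih =>
    exact (ih.mono (p.F.mono (Nat.le_succ k)) le_rfl).max
      (l1_meas (m := p.F (k + 1)) _ (mus_meas p C γ (k + 1)) ls)

lemma le_Wp (p : Protocol ν r c T P) (C : Fin d → ℝ) (γ : ℝ) (ls : Fin d → ℝ) (k : ℕ) (ω : Ω) :
    l1 ls (mus p C γ k ω) ≤ Wp p C γ ls k ω := by
  cases k with
  | zero => exact le_rfl
  | succ k => exact le_max_right _ _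

lemma isMD_cost [IsProbabilityMeasure P] (p : Protocol ν r c T P)
    (hc : ∀ x' a' i, c x' a' i ∈ Set.Icc (-1 : ℝ) 1) (i : Fin d) :
    IsMD P p.F T 2 (fun k ω => p.cost (k + 1) ω i - mc p k ω i) := by
  refine ⟨fun k => (p.cost_adapted (k + 1) i).sub (mc_meas p k i), fun k ω => ?_,
    fun k hk Y hY hYb => ?_⟩
  · have h1 := p.cost_mem (k + 1) ω i
    have h2 := mc_mem p k ω i
    rw [abs_le]; constructor <;> linarith [h1.1, h1.2, h2.1, h2.2]
  · obtain ⟨K, hK⟩ := hYb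
    have hle : preF p k ≤ (inferInstance : MeasurableSpace Ω) := (preF_le p k).trans (p.F.le _)
    have hcm : Measurable (fun ω => p.cost (k + 1) ω i) :=
      (p.cost_adapted (k + 1) i).mono (p.F.le _) le_rfl
    have hcb : ∀ ω, |p.cost (k + 1) ω i| ≤ 1 := fun ω => abs_le.2 (p.cost_mem (k + 1) ω i)
    have hYm : Measurable Y := hY.mono (p.F.le _) le_rfl
    have hci := exp_bdd_integrable P _ hcm 1 hcb
    have hYci : Integrable (Y * fun ω => p.cost (k + 1) ω i) P :=
      exp_bdd_integrable P _ (hYm.mul hcm) (K * 1) fun ω => by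
        simp only [Pi.mul_apply]
        rw [abs_mul]
        exact mul_le_mul (hK ω) (hcb ω) (abs_nonneg _) ((abs_nonneg _).trans (hK ω))
    have hmm : Measurable (fun ω => mc p k ω i) := (mc_meas p k i).mono (p.F.le _) le_rfl
    have hYmi : Integrable (fun ω => Y ω * mc p k ω i) P :=
      exp_bdd_integrable P _ (hYm.mul hmm) (K * 1) fun ω => by
        rw [abs_mul]
        exact mul_le_mul (hK ω) (abs_le.2 (mc_mem p k ω i)) (abs_nonneg _)
          ((abs_nonneg _).trans (hK ω))
    have hYs : StronglyMeasurable[preF p k] Y :=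
      (hY.mono (le_preF p k) le_rfl).stronglyMeasurable
    have hpull := condExp_mul_of_stronglyMeasurable_left hYs hYci hci
    have e1 : ∫ ω, Y ω * p.cost (k + 1) ω i ∂P = ∫ ω, Y ω * mc p k ω i ∂P := by
      have a1 := integral_condExp (μ := P) (m := preF p k) (f := Y * fun ω => p.cost (k + 1) ω i) hle
      have a2 : ∫ ω, Y ω * p.cost (k + 1) ω i ∂P
          = ∫ ω, (Y * fun ω => p.cost (k + 1) ω i) ω ∂P := rfl
      rw [a2, ← a1]
      refine integral_congr_ae ?_
      filter_upwards [hpull, (mc_ae p hc k hk i).2] with ω b1 b2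
      rw [b1, b2]; rfl
    simp only [mul_sub]
    have hYci' : Integrable (fun ω => Y ω * p.cost (k + 1) ω i) P := hYci
    rw [integral_sub hYci' hYmi, e1, sub_self]

end proc

lemma union_bd {Ω ι : Type*} [MeasurableSpace Ω] (P : Measure Ω) (s : Finset ι) (f : ι → Set Ω)
    (q Q : ℝ) (h : ∀ i ∈ s, P (f i) ≤ ENNReal.ofReal q) (hQ : s.card * q ≤ Q) :
    P (⋃ i ∈ s, f i) ≤ ENNReal.ofReal Q := by
  refine (measure_biUnion_finset_le s f).trans ((Finset.sum_le_sum h).trans ?_)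
  rw [Finset.sum_const, nsmul_eq_mul, ← ENNReal.ofReal_natCast, ← ENNReal.ofReal_mul (by positivity)]
  exact ENNReal.ofReal_le_ofReal hQ

lemma sum_Icc_range (f : ℕ → ℝ) (t : ℕ) :
    ∑ τ ∈ Finset.Icc 1 t, f τ = ∑ k ∈ Finset.range t, f (k + 1) := by
  induction t with
  | zero => simp
  | succ t ih => rw [Finset.sum_Icc_succ_top (by omega), ih, Finset.sum_range_succ]

lemma round_ineq {X A : Type*} [MeasurableSpace X] [Fintype A] [Nonempty A] {d : ℕ}
    (ν : Measure X) (r : X → A → ℝ)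
    (c : X → A → Fin d → ℝ) (C : Fin d → ℝ) (x : X) (a : A) (rb : A → ℝ) (cb : A → Fin d → ℝ)
    (e : ℝ) (lam ls : Fin d → ℝ) (hlam : ∀ i, 0 ≤ lam i) (hls : ∀ i, 0 ≤ ls i)
    (hmax : ∀ a', rb a' - ∑ i, (cb a' i - C i) * lam i ≤ rb a - ∑ i, (cb a i - C i) * lam i)
    (h1 : ∀ a', r x a' ≤ rb a') (h2 : ∀ a' i, cb a' i ≤ c x a' i) (h3 : rb a ≤ r x a + 2 * e)
    (h4 : ∀ i, c x a i - 2 * e ≤ cb a i) (hL : L ν r c ls C ≤ L ν r c lam C) :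
    ∑ i, (cb a i - C i) * (lam i - ls i)
      ≤ gf ν r c C x ls - gf ν r c C x lam + 2 * e * (1 + ∑ i, ls i) := by
  have a1 : hf r c C x lam ≤ rb a - ∑ i, (cb a i - C i) * lam i := by
    refine Finset.sup'_le _ _ fun a' _ => le_trans ?_ (hmax a')
    have : ∑ i, (cb a' i - C i) * lam i ≤ ∑ i, (c x a' i - C i) * lam i :=
      Finset.sum_le_sum fun i _ => mul_le_mul_of_nonneg_right (by linarith [h2 a' i]) (hlam i)
    linarith [h1 a']
  have a2 : r x a - ∑ i, (c x a i - C i) * ls i ≤ hf r c C x ls :=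
    Finset.le_sup' (fun a => r x a - ∑ i, (c x a i - C i) * ls i) (Finset.mem_univ a)
  have a3 : ∑ i, (c x a i - C i) * ls i ≤ ∑ i, (cb a i - C i) * ls i + 2 * e * ∑ i, ls i := by
    rw [Finset.mul_sum, ← Finset.sum_add_distrib]
    refine Finset.sum_le_sum fun i _ => ?_
    have := mul_le_mul_of_nonneg_right (h4 i) (hls i)
    linarith
  have a4 : ∑ i, (cb a i - C i) * (lam i - ls i)
      = ∑ i, (cb a i - C i) * lam i - ∑ i, (cb a i - C i) * ls i := by
    rw [← Finset.sum_sub_distrib]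
    exact Finset.sum_congr rfl fun i _ => by ring
  unfold gf
  linarith

lemma logfacts (d T : ℕ) (hd : 0 < d) (hT : 1 ≤ T) (δ : ℝ) (hδ : δ ∈ Set.Ioo (0 : ℝ) 1) :
    1 ≤ Real.log (4 * T ^ 2 / δ) ∧ 0 ≤ Real.log (8 * (d + 1) * T / δ) ∧
    Real.exp (-Real.log (4 * T ^ 2 / δ)) = δ / (4 * T ^ 2) ∧
    Real.exp (-Real.log (8 * (d + 1) * T / δ)) = δ / (8 * (d + 1) * T) ∧
    ((2 * T ^ 2 + 1 : ℕ) : ℝ) ≤ 4 * T ^ 2 / δ := by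
  obtain ⟨h0, h1⟩ := hδ
  have hT1 : (1 : ℝ) ≤ T := by exact_mod_cast hT
  have hd1 : (1 : ℝ) ≤ d := by exact_mod_cast hd
  have hT2 : (1 : ℝ) ≤ (T : ℝ) ^ 2 := one_le_pow₀ hT1
  have p1 : (0 : ℝ) < 4 * T ^ 2 / δ := by positivity
  have p2 : (0 : ℝ) < 8 * (d + 1) * T / δ := by positivity
  have q1 : 4 * (T : ℝ) ^ 2 ≤ 4 * T ^ 2 / δ := by
    rw [le_div_iff₀ h0]
    nlinarith
  refine ⟨?_, ?_, ?_, ?_, ?_⟩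
  · rw [Real.le_log_iff_exp_le p1]
    have := Real.exp_one_lt_d9
    linarith
  · refine Real.log_nonneg ?_
    rw [le_div_iff₀ h0]
    nlinarith
  · rw [Real.exp_neg, Real.exp_log p1, inv_div]
  · rw [Real.exp_neg, Real.exp_log p2, inv_div]
  · push_cast; linarith

lemma count2 (d T : ℕ) (hd : 0 < d) (hT : 1 ≤ T) (δ : ℝ) (hδ : δ ∈ Set.Ioo (0 : ℝ) 1) :
    ((T * T * ((2 * T ^ 2 + 1) ^ d * (2 * T ^ 2 + 1) ^ d) : ℕ) : ℝ)
      * Real.exp (-(3 * d * Real.log (4 * T ^ 2 / δ))) ≤ δ / 4 := by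
  obtain ⟨l1, l2, l3, l4, l5⟩ := logfacts d T hd hT δ hδ
  obtain ⟨h0, h1⟩ := hδ
  have hT1 : (1 : ℝ) ≤ T := by exact_mod_cast hT
  set E : ℝ := 4 * T ^ 2 / δ with hE
  have hE0 : 0 < E := by positivity
  have hE1 : 1 ≤ E := le_trans (by push_cast; nlinarith) l5
  have e1 : Real.exp (-(3 * d * Real.log E)) = (E ^ (3 * d))⁻¹ := by
    rw [Real.exp_neg, inv_inj]
    have : 3 * (d : ℝ) * Real.log E = ((3 * d : ℕ) : ℝ) * Real.log E := by push_cast; ring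
    rw [this, Real.exp_nat_mul, Real.exp_log hE0]
  rw [e1, ← div_eq_mul_inv, div_le_iff₀ (by positivity)]
  have k1 : ((2 * T ^ 2 + 1 : ℕ) : ℝ) ^ d ≤ E ^ d := pow_le_pow_left₀ (by positivity) l5 d
  have k2 : E ≤ E ^ d := le_self_pow₀ hE1 (by omega)
  have k3 : δ / 4 * E = T * T := by rw [hE]; field_simp
  have k4 : (T : ℝ) * T ≤ δ / 4 * E ^ d := by
    rw [← k3]; exact mul_le_mul_of_nonneg_left k2 (by positivity)
  have k5 : ((2 * T ^ 2 + 1 : ℕ) : ℝ) ^ d * ((2 * T ^ 2 + 1 : ℕ) : ℝ) ^ d ≤ E ^ d * E ^ d :=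
    mul_le_mul k1 k1 (by positivity) (by positivity)
  calc ((T * T * ((2 * T ^ 2 + 1) ^ d * (2 * T ^ 2 + 1) ^ d) : ℕ) : ℝ)
      = (T : ℝ) * T * (((2 * T ^ 2 + 1 : ℕ) : ℝ) ^ d * ((2 * T ^ 2 + 1 : ℕ) : ℝ) ^ d) := by
        push_cast; ring
    _ ≤ (δ / 4 * E ^ d) * (E ^ d * E ^ d) := mul_le_mul k4 k5 (by positivity) (by positivity)
    _ = δ / 4 * E ^ (3 * d) := by ring

lemma det_final {d : ℕ} (γ : ℝ) (hγ : 0 < γ) (lam : ℕ → Fin d → ℝ)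
    (cl ct co : ℕ → Fin d → ℝ) (eps : ℕ → ℝ) (C : Fin d → ℝ) (T t : ℕ) (ht : t ≤ T)
    (l0 : ∀ i, lam 0 i = 0)
    (lu : ∀ k < T, ∀ i, lam (k + 1) i = max (lam k i + γ * (cl k i - C i)) 0)
    (h2 : ∀ k < T, ∀ i, ct k i - 2 * eps k ≤ cl k i)
    (he : ∀ k, 0 ≤ eps k) (U z2 n : ℝ) (hU0 : 0 ≤ U) (hz2 : z2 ≤ 2 * U) (hn : 0 ≤ n)
    (hβ : ∑ k ∈ Finset.range T, eps k ≤ U)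
    (hco : ∀ i, ∑ k ∈ Finset.range t, (co k i - ct k i) ≤ z2)
    (hlam : enorm (lam t) ≤ 1 + 2 * n + 12 * (γ * Real.sqrt d * U)) :
    enorm (fun i => max ((∑ k ∈ Finset.range t, co k i) - t * C i) 0)
      ≤ (1 + 3 * n) / γ + 20 * Real.sqrt d * U := by
  have hlow : ∀ s ≤ T, ∀ i, γ * ∑ k ∈ Finset.range s, (cl k i - C i) ≤ lam s i ∧ 0 ≤ lam s i := by
    intro s
    induction s with
    | zero => intro _ i; simp [l0]
    | succ s ih =>
      intro hs i
      have h1 := (ih (by omega) i).1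
      rw [Finset.sum_range_succ, mul_add, lu s (by omega) i]
      exact ⟨(by linarith : _ ≤ _).trans (le_max_left _ _), le_max_right _ _⟩
  have hcomp : ∀ i, max ((∑ k ∈ Finset.range t, co k i) - t * C i) 0
      ≤ γ⁻¹ * lam t i + 4 * U := by
    intro i
    have hl := hlow t ht i
    refine max_le ?_ (by have := mul_nonneg (inv_nonneg.2 hγ.le) hl.2; linarith)
    have a1 : ∑ k ∈ Finset.range t, (cl k i - C i) ≤ γ⁻¹ * lam t i := by
      rw [inv_mul_eq_div, le_div_iff₀ hγ]; linarith [hl.1]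
    have a2 : ∑ k ∈ Finset.range t, (ct k i - cl k i) ≤ 2 * U := by
      have b1 : ∑ k ∈ Finset.range t, (ct k i - cl k i) ≤ ∑ k ∈ Finset.range t, 2 * eps k :=
        Finset.sum_le_sum fun k hk => by
          have := h2 k (by have := Finset.mem_range.1 hk; omega) i
          linarith
      have b2 : ∑ k ∈ Finset.range t, eps k ≤ ∑ k ∈ Finset.range T, eps k :=
        Finset.sum_le_sum_of_subset_of_nonneg (Finset.range_mono ht) (fun k _ _ => he k)
      rw [← Finset.mul_sum] at b1
      linarith
    have a3 : (∑ k ∈ Finset.range t, co k i) - t * C i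
        = ∑ k ∈ Finset.range t, (co k i - ct k i) + ∑ k ∈ Finset.range t, (ct k i - cl k i)
          + ∑ k ∈ Finset.range t, (cl k i - C i) := by
      simp only [Finset.sum_sub_distrib, Finset.sum_const, Finset.card_range, nsmul_eq_mul]
      ring
    have := hco i
    linarith
  have h1 := enorm_mono _ _ (fun i => le_max_right ((∑ k ∈ Finset.range t, co k i) - t * C i) 0) hcomp
  have h3 := enorm_add_le' (fun i => γ⁻¹ * lam t i) (fun _ => 4 * U)
  rw [enorm_smul' _ (inv_nonneg.2 hγ.le), enorm_const _ (by positivity)] at h3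
  have h4 := mul_le_mul_of_nonneg_left hlam (inv_nonneg.2 hγ.le)
  have h5 : γ⁻¹ * (1 + 2 * n + 12 * (γ * Real.sqrt d * U))
      = (1 + 2 * n) / γ + 12 * (Real.sqrt d * U) := by field_simp
  have h6 : (1 + 2 * n) / γ ≤ (1 + 3 * n) / γ := by gcongr; linarith
  have h7 : 0 ≤ Real.sqrt d * U := by positivity
  linarith

set_option maxHeartbeats 4000000 in
/-- Lemma 1 of the paper: with probability at least `1−δ`, the Box B strategy (run with
step size `γ`, confidence parameter `δ/4` and margin `b`) keeps the positive part of the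
cost deviations controlled, for all `1 ≤ t ≤ T`:
`‖(Σ_{τ≤t} c_τ − t(B−b·1))₊‖ ≤ (1 + 3‖λ*_{B−b·1}‖)/γ + 20√d·Υ_{T,δ}`. -/
theorem lemma_one
    {X : Type*} [MeasurableSpace X] {A : Type*} [Fintype A] [Nonempty A] [MeasurableSpace A]
    {d : ℕ} {Ω : Type*} [MeasurableSpace Ω]
    (ν : Measure X) [IsProbabilityMeasure ν] (P : Measure Ω) [IsProbabilityMeasure P]
    (r : X → A → ℝ) (c : X → A → Fin d → ℝ) (T : ℕ) (hT : 1 ≤ T) (hd : 0 < d)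
    (hr : ∀ x' a', r x' a' ∈ Set.Icc (0 : ℝ) 1)
    (hc : ∀ x' a' i, c x' a' i ∈ Set.Icc (-1 : ℝ) 1)
    (hrm : ∀ a', Measurable fun x' => r x' a')
    (hcm : ∀ a' i, Measurable fun x' => c x' a' i)
    (B : Fin d → ℝ) (hB : ∀ i, B i ∈ Set.Icc (0 : ℝ) 1)
    (δ γ b : ℝ) (hδ : δ ∈ Set.Ioo (0 : ℝ) 1) (hγ : 0 < γ)
    (hb0 : 0 < b) (hb : b < minComp B)
    (hfeas : ∃ B' : Fin d → ℝ, (∀ i, B' i < B i - b) ∧ Feasible ν c B')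
    (p : Protocol ν r c T P) (box : BoxB p B γ (δ / 4) b)
    (lamstar : Fin d → ℝ) (hls0 : ∀ i, 0 ≤ lamstar i)
    (hmin : ∀ lam : Fin d → ℝ, (∀ i, 0 ≤ lam i) →
      L ν r c lamstar (fun i => B i - b) ≤ L ν r c lam (fun i => B i - b)) :
    ENNReal.ofReal (1 - δ) ≤
      P {ω | ∀ t ∈ Finset.Icc 1 T,
        enorm (fun i => max ((∑ τ ∈ Finset.Icc 1 t, p.cost τ ω i) - t * (B i - b)) 0)
          ≤ (1 + 3 * enorm lamstar) / γ + 20 * Real.sqrt d * p.Upsilon δ ω} := by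
  classical
  have hd1 : (1 : ℝ) ≤ d := by exact_mod_cast hd
  have hT1 : (1 : ℝ) ≤ T := by exact_mod_cast hT
  have hδ0 := hδ.1
  have hδ1 := hδ.2
  obtain ⟨lg1, lg2, lg3, lg4, lg5⟩ := logfacts d T hd hT δ hδ
  obtain ⟨C, hC⟩ : ∃ C : Fin d → ℝ, C = fun i => B i - b := ⟨_, rfl⟩
  have hC01 : ∀ i, 0 ≤ C i ∧ C i ≤ 1 := by
    intro i
    have h1 : minComp B ≤ B i := ciInf_le (Set.finite_range B).bddBelow i
    have h2 := (hB i).2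
    rw [hC]
    constructor <;> simp only <;> linarith
  have hcC : ∀ x a i, |c x a i - C i| ≤ 2 := by
    intro x a i
    have h1 := hc x a i
    have h2 := hC01 i
    rw [abs_le]; constructor <;> linarith [h1.1, h1.2]
  set ℓ := Real.log (4 * T ^ 2 / δ) with hℓ
  set ℓ' := Real.log (8 * (d + 1) * T / δ) with hℓ'
  obtain ⟨z1, hz1⟩ : ∃ z, z = Real.sqrt (32 * T * ℓ) := ⟨_, rfl⟩
  obtain ⟨z2, hz2⟩ : ∃ z, z = 2 * Real.sqrt (2 * T * ℓ') := ⟨_, rfl⟩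
  obtain ⟨z3, hz3⟩ : ∃ z, z = Real.sqrt (96 * (d * T * ℓ)) := ⟨_, rfl⟩
  have hz10 : 0 ≤ z1 := by rw [hz1]; positivity
  have hz20 : 0 ≤ z2 := by rw [hz2]; positivity
  have hz30 : 0 ≤ z3 := by rw [hz3]; positivity
  have hℓ0 : 0 ≤ ℓ := by linarith
  have sq1 : z1 ^ 2 = 32 * T * ℓ := by rw [hz1, Real.sq_sqrt (by positivity)]
  have sq2 : z2 ^ 2 = 8 * T * ℓ' := by rw [hz2, mul_pow, Real.sq_sqrt (by positivity)]; ring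
  have sq3 : z3 ^ 2 = 96 * (d * T * ℓ) := by rw [hz3, Real.sq_sqrt (by positivity)]
  -- the martingale difference sequences
  obtain ⟨mu, hmu⟩ : ∃ m, m = mus p C γ := ⟨_, rfl⟩
  obtain ⟨W, hW⟩ : ∃ m, m = Wp p C γ lamstar := ⟨_, rfl⟩
  obtain ⟨g, hg⟩ : ∃ g, g = gf ν r c C := ⟨_, rfl⟩
  have hmum : ∀ k, Measurable[p.F k] (mu k) := by rw [hmu]; exact mus_meas p C γ
  have MD1 : IsMD P p.F T 4 (fun k ω => (g (p.x (k + 1) ω) lamstar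
      - g (p.x (k + 1) ω) (mu k ω)) / W k ω) := by
    rw [hg]
    refine isMD_gf ν P r c T hr C hcC hrm hcm p (fun _ _ => lamstar) mu W
      (fun k => measurable_const) hmum ?_ ?_
    · rw [hW]; exact Wp_meas p C γ lamstar
    · rw [hW, hmu]; exact le_Wp p C γ lamstar
  have hshift : ∀ (v : Fin d → ℝ) k, Measurable[p.F k] (fun ω i => mu k ω i - v i) := by
    intro v k
    refine @measurable_pi_lambda Ω (Fin d) (fun _ => ℝ) (p.F k) _ _ fun i => ?_
    exact ((measurable_pi_apply i).comp (hmum k)).sub_const _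
  have MD2 : ∀ u v : Fin d → ℕ, IsMD P p.F T 4 (fun k ω =>
      (g (p.x (k + 1) ω) (fun i => mu k ω i - γ / T * u i)
      - g (p.x (k + 1) ω) (fun i => mu k ω i - γ / T * v i))
        / l1 (fun i => γ / T * (u i : ℝ)) (fun i => γ / T * (v i : ℝ))) := by
    intro u v
    rw [hg]
    refine isMD_gf ν P r c T hr C hcC hrm hcm p (fun k ω i => mu k ω i - γ / T * u i)
      (fun k ω i => mu k ω i - γ / T * v i)
      (fun _ _ => l1 (fun i => γ / T * (u i : ℝ)) (fun i => γ / T * (v i : ℝ)))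
      (hshift _) (hshift _) (fun k => measurable_const) ?_
    intro k ω
    rw [l1_comm (fun i => γ / T * (u i : ℝ))]
    unfold l1
    refine le_of_eq (Finset.sum_congr rfl fun i _ => ?_)
    congr 1; ring
  have MD3 := fun i => isMD_cost p hc i
  -- bad events
  obtain ⟨bad1, hbad1⟩ : ∃ S : Set Ω, S = ⋃ q ∈ Finset.range T ×ˢ Finset.range T,
      {ω | z1 ≤ ∑ k ∈ Finset.Ico q.1 (q.2 + 1), (g (p.x (k + 1) ω) lamstar
        - g (p.x (k + 1) ω) (mu k ω)) / W k ω} := ⟨_, rfl⟩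
  obtain ⟨G, hG⟩ : ∃ G : Finset (Fin d → ℕ),
    G = Fintype.piFinset (fun _ : Fin d => Finset.range (2 * T ^ 2 + 1)) := ⟨_, rfl⟩
  obtain ⟨bad2, hbad2⟩ : ∃ S : Set Ω,
      S = ⋃ q ∈ (Finset.range T ×ˢ Finset.range T) ×ˢ (G ×ˢ G),
      {ω | z3 ≤ ∑ k ∈ Finset.Ico q.1.1 (q.1.2 + 1),
        (g (p.x (k + 1) ω) (fun i => mu k ω i - γ / T * q.2.1 i)
        - g (p.x (k + 1) ω) (fun i => mu k ω i - γ / T * q.2.2 i))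
        / l1 (fun i => γ / T * (q.2.1 i : ℝ)) (fun i => γ / T * (q.2.2 i : ℝ))} := ⟨_, rfl⟩
  obtain ⟨bad3, hbad3⟩ : ∃ S : Set Ω, S = ⋃ q ∈ (Finset.univ : Finset (Fin d)) ×ˢ Finset.range T,
      {ω | z2 ≤ ∑ k ∈ Finset.Ico 0 (q.2 + 1), (p.cost (k + 1) ω q.1 - mc p k ω q.1)} := ⟨_, rfl⟩
  have Pb1 : P bad1 ≤ ENNReal.ofReal (δ / 4) := by
    rw [hbad1]
    refine union_bd P _ _ (Real.exp (-ℓ)) _ (fun q hq => ?_) ?_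
    · have hq' := Finset.mem_range.1 (Finset.mem_product.1 hq).2
      have h := azuma P p.F T hT 4 (by norm_num) _ MD1 q.1 (q.2 + 1) (by omega) z1 hz10
      have e : z1 ^ 2 / (2 * T * 4 ^ 2) = ℓ := by rw [sq1]; field_simp; norm_num
      rwa [e] at h
    · rw [Finset.card_product, Finset.card_range, lg3]
      push_cast
      refine le_of_eq ?_
      field_simp
  have Pb2 : P bad2 ≤ ENNReal.ofReal (δ / 4) := by
    rw [hbad2]
    refine union_bd P _ _ (Real.exp (-(3 * d * ℓ))) _ (fun q hq => ?_) ?_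
    · have hq' := Finset.mem_range.1 (Finset.mem_product.1 (Finset.mem_product.1 hq).1).2
      have h := azuma P p.F T hT 4 (by norm_num) _ (MD2 q.2.1 q.2.2) q.1.1 (q.1.2 + 1)
        (by omega) z3 hz30
      have e : z3 ^ 2 / (2 * T * 4 ^ 2) = 3 * d * ℓ := by rw [sq3]; field_simp; norm_num
      rwa [e] at h
    · have hcard : ((Finset.range T ×ˢ Finset.range T) ×ˢ (G ×ˢ G)).card
          = T * T * ((2 * T ^ 2 + 1) ^ d * (2 * T ^ 2 + 1) ^ d) := by
        rw [Finset.card_product, Finset.card_product, Finset.card_product, Finset.card_range, hG,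
          Fintype.card_piFinset]
        simp
      rw [hcard]
      exact count2 d T hd hT δ hδ
  have Pb3 : P bad3 ≤ ENNReal.ofReal (δ / 4) := by
    rw [hbad3]
    refine union_bd P _ _ (Real.exp (-ℓ')) _ (fun q hq => ?_) ?_
    · have hq' := Finset.mem_range.1 (Finset.mem_product.1 hq).2
      have h := azuma P p.F T hT 2 (by norm_num) _ (MD3 q.1) 0 (q.2 + 1) (by omega) z2 hz20
      have e : z2 ^ 2 / (2 * T * 2 ^ 2) = ℓ' := by rw [sq2]; field_simp; ring
      rwa [e] at h
    · rw [Finset.card_product, Finset.card_range, lg4, Finset.card_univ, Fintype.card_fin]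
      push_cast
      rw [mul_div_assoc', div_le_iff₀ (by positivity)]
      have : 0 ≤ (T : ℝ) * δ := by positivity
      nlinarith
  obtain ⟨bad0, hbad0⟩ : ∃ S : Set Ω, S = {ω | ¬ ∀ k : Fin T, ∀ i : Fin d,
      mc p k ω i = c (p.x (k + 1) ω) (p.act (k + 1) ω) i} := ⟨_, rfl⟩
  have Pb0 : P bad0 = 0 := by
    rw [hbad0]
    have : ∀ᵐ ω ∂P, ∀ k : Fin T, ∀ i : Fin d,
        mc p k ω i = c (p.x (k + 1) ω) (p.act (k + 1) ω) i :=
      ae_all_iff.2 fun k => ae_all_iff.2 fun i => (mc_ae p hc k k.2 i).1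
    exact this
  have hest := p.est (δ / 4) (by linarith) (by linarith)
  set E : Set Ω := {ω | ∀ t ≤ T, ∀ x' a',
      |p.rhat t ω x' a' - r x' a'| ≤ p.eps t ω x' a' (δ / 4)
      ∧ ∀ i, |p.chat t ω x' a' i - c x' a' i| ≤ p.eps t ω x' a' (δ / 4)} with hE
  set S : Set Ω := {ω | ∀ t ∈ Finset.Icc 1 T,
        enorm (fun i => max ((∑ τ ∈ Finset.Icc 1 t, p.cost τ ω i) - t * (B i - b)) 0)
          ≤ (1 + 3 * enorm lamstar) / γ + 20 * Real.sqrt d * p.Upsilon δ ω} with hS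
  have hsub : E ⊆ S ∪ (bad0 ∪ (bad1 ∪ (bad2 ∪ bad3))) := by
    intro ω hω
    by_contra hcon
    simp only [Set.mem_union, not_or] at hcon
    obtain ⟨c0, c1, c2, c3, c4⟩ := hcon
    apply c0
    rw [hbad0] at c1
    rw [hbad1] at c2
    rw [hbad2] at c3
    rw [hbad3] at c4
    simp only [Set.mem_setOf_eq, not_not] at c1
    simp only [Set.mem_iUnion, Set.mem_setOf_eq, not_exists, not_le] at c2 c3 c4
    intro t ht
    have ht' := Finset.mem_Icc.1 ht
    obtain ⟨U, hU⟩ : ∃ U, U = p.Upsilon δ ω := ⟨_, rfl⟩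
    have hUA : 2 * Real.sqrt (d * T * ℓ) ≤ U := by
      rw [hU]; exact (le_max_left _ _).trans (le_max_right _ _)
    have hUB : Real.sqrt (2 * T * ℓ') ≤ U := by
      rw [hU]; exact (le_max_right _ _).trans (le_max_right _ _)
    have hUb : p.beta (δ / 4) ω ≤ U := by rw [hU]; exact le_max_left _ _
    have hU0 : 0 ≤ U := le_trans (by positivity) hUB
    have hS0 : 0 ≤ Real.sqrt (d * T * ℓ) := Real.sqrt_nonneg _
    have hSs : Real.sqrt (d * T * ℓ) ^ 2 = d * T * ℓ := Real.sq_sqrt (by positivity)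
    have hU2 : 4 * (d * T * ℓ) ≤ U ^ 2 := by
      have := pow_le_pow_left₀ (by positivity) hUA 2
      rw [mul_pow, hSs] at this
      linarith
    have hzU1 : Real.sqrt d * z1 ≤ 3 * U := by
      rw [hz1, ← Real.sqrt_mul (Nat.cast_nonneg d)]
      refine Real.sqrt_le_iff.2 ⟨by positivity, ?_⟩
      have : 0 ≤ d * T * ℓ := by positivity
      nlinarith
    have hzU3 : z3 ≤ 4.9 * U := by
      rw [hz3]
      refine Real.sqrt_le_iff.2 ⟨by positivity, ?_⟩
      nlinarith
    have hz2U : z2 ≤ 2 * U := by rw [hz2]; linarith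
    have hU4 : 4 * (d : ℝ) * T ≤ U ^ 2 := by
      have : (d : ℝ) * T * 1 ≤ d * T * ℓ := mul_le_mul_of_nonneg_left lg1 (by positivity)
      linarith
    obtain ⟨eps, heps⟩ : ∃ e : ℕ → ℝ,
      e = fun k => p.eps k ω (p.x (k + 1) ω) (p.act (k + 1) ω) (δ / 4) := ⟨_, rfl⟩
    obtain ⟨cl, hcl⟩ : ∃ e : ℕ → Fin d → ℝ,
      e = fun k => p.clcb (δ / 4) k ω (p.x (k + 1) ω) (p.act (k + 1) ω) := ⟨_, rfl⟩
    obtain ⟨ct, hct⟩ : ∃ e : ℕ → Fin d → ℝ, e = fun k => mc p k ω := ⟨_, rfl⟩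
    obtain ⟨lam, hlam⟩ : ∃ e : ℕ → Fin d → ℝ, e = fun k => box.lam k ω := ⟨_, rfl⟩
    have hctc : ∀ k < T, ∀ i, ct k i = c (p.x (k + 1) ω) (p.act (k + 1) ω) i := by
      intro k hk i; rw [hct]; exact c1 ⟨k, hk⟩ i
    have he0 : ∀ k, 0 ≤ eps k := by intro k; rw [heps]; exact (p.eps_mem _ _ _ _ _).1
    have he1 : ∀ k, eps k ≤ 1 := by intro k; rw [heps]; exact (p.eps_mem _ _ _ _ _).2
    have hβ : ∑ k ∈ Finset.range T, eps k ≤ U := by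
      refine le_trans (le_of_eq ?_) hUb
      unfold Protocol.beta
      rw [sum_Icc_range, heps]
      rfl
    have hcle : ∀ k < T, ∀ x' a' i, p.clcb (δ / 4) k ω x' a' i ≤ c x' a' i := by
      intro k hk x' a' i
      have h := abs_le.1 ((hω k hk.le x' a').2 i)
      exact (min_le_left _ _).trans (max_le (by linarith [h.1, h.2]) (hc x' a' i).1)
    have hcge : ∀ k < T, ∀ x' a' i,
        c x' a' i - 2 * p.eps k ω x' a' (δ / 4) ≤ p.clcb (δ / 4) k ω x' a' i := by
      intro k hk x' a' i
      have h := abs_le.1 ((hω k hk.le x' a').2 i)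
      have h3 := (p.eps_mem k ω x' a' (δ / 4)).1
      refine le_min (le_trans ?_ (le_max_left _ _)) ?_
      · linarith [h.1, h.2]
      · linarith [(hc x' a' i).2]
    have hrge : ∀ k < T, ∀ x' a', r x' a' ≤ p.rucb (δ / 4) k ω x' a' := by
      intro k hk x' a'
      have h := abs_le.1 (hω k hk.le x' a').1
      refine le_min (le_trans ?_ (le_max_left _ _)) (hr x' a').2
      linarith [h.1, h.2]
    have hrle : ∀ k < T, ∀ x' a',
        p.rucb (δ / 4) k ω x' a' ≤ r x' a' + 2 * p.eps k ω x' a' (δ / 4) := by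
      intro k hk x' a'
      have h := abs_le.1 (hω k hk.le x' a').1
      have h3 := (p.eps_mem k ω x' a' (δ / 4)).1
      refine (min_le_left _ _).trans (max_le (by linarith [h.1, h.2]) ?_)
      linarith [(hr x' a').1]
    have l0 : ∀ i, lam 0 i = 0 := by intro i; rw [hlam]; exact box.lam_zero ω i
    have lu : ∀ k < T, ∀ i, lam (k + 1) i = max (lam k i + γ * (cl k i - C i)) 0 := by
      intro k hk i
      have h := box.lam_update (k + 1) (by omega) (by omega) ω i
      rw [hlam, hcl, hC]
      exact h
    have lnn : ∀ k ≤ T, ∀ i, 0 ≤ lam k i := by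
      intro k hk i
      rcases k with _ | k
      · rw [l0]
      · rw [lu k (by omega)]; exact le_max_right _ _
    have h1 : ∀ k < T, ∀ i, cl k i ≤ ct k i := by
      intro k hk i; rw [hctc k hk, hcl]; exact hcle k hk _ _ i
    have h2 : ∀ k < T, ∀ i, ct k i - 2 * eps k ≤ cl k i := by
      intro k hk i; rw [hctc k hk, hcl, heps]; exact hcge k hk _ _ i
    have hD : ∀ k < T, ∀ i, |cl k i - C i| ≤ 2 := by
      intro k hk i
      have a1 : -1 ≤ cl k i := by
        rw [hcl]; exact le_min (le_max_right _ _) (by norm_num)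
      have a2 : cl k i ≤ 1 := by rw [hcl]; exact min_le_right _ _
      have a3 := hC01 i
      rw [abs_le]; constructor <;> linarith
    have hround : ∀ k < T, ∑ i, (cl k i - C i) * (lam k i - lamstar i)
        ≤ g (p.x (k + 1) ω) lamstar - g (p.x (k + 1) ω) (lam k)
          + 2 * eps k * (1 + ∑ i, lamstar i) := by
      intro k hk
      rw [hg, hcl, heps]
      refine round_ineq ν r c C (p.x (k + 1) ω) (p.act (k + 1) ω)
        (fun a' => p.rucb (δ / 4) k ω (p.x (k + 1) ω) a')
        (fun a' => p.clcb (δ / 4) k ω (p.x (k + 1) ω) a') _ (lam k) lamstar (lnn k hk.le) hls0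
        ?_ (fun a' => hrge k hk _ a') (fun a' i => hcle k hk _ a' i) (hrle k hk _ _)
        (fun i => hcge k hk _ _ i) ?_
      · intro a'
        rw [hlam, hC]
        exact box.act_max (k + 1) (by omega) (by omega) ω a'
      · rw [hC]; exact hmin _ (lnn k hk.le)
    have hcore := core hd T hT γ hγ (fun k => g (p.x (k + 1) ω))
      (fun k l l' => by rw [hg]; exact gf_lip ν r c C hr hcC hrm hcm _ l l')
      lam (fun k => mu k ω) cl ct eps C l0 (fun i => by rw [hmu]; rfl) lu
      (fun k hk i => by rw [hmu, hct]; rfl) h1 h2 hD he0 he1 z1 z3 U hz10 hz30 hβ hzU1 hzU3 hU4 hU0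
      lamstar hls0 hround (fun k => W k ω) (by rw [hW, hmu]; rfl)
      (fun k => by rw [hW, hmu]; rfl)
      (fun s hs t ht => (c2 (s, t) (Finset.mem_product.2
        ⟨Finset.mem_range.2 hs, Finset.mem_range.2 ht⟩)).le)
      (fun s hs t ht u v hu hv => (c3 ((s, t), (u, v)) (Finset.mem_product.2
        ⟨Finset.mem_product.2 ⟨Finset.mem_range.2 hs, Finset.mem_range.2 ht⟩,
          Finset.mem_product.2 ⟨by
            rw [hG]; exact Fintype.mem_piFinset.2 fun i => Finset.mem_range.2 (Nat.lt_succ_of_le (hu i)),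
            by
            rw [hG]; exact Fintype.mem_piFinset.2 fun i => Finset.mem_range.2 (Nat.lt_succ_of_le (hv i))⟩⟩)).le)
      t ht'.2
    have hfin := det_final γ hγ lam cl ct (fun k => p.cost (k + 1) ω) eps C T t ht'.2 l0 lu h2 he0
      U z2 (enorm lamstar) hU0 hz2U (enorm_nonneg' _) hβ
      (fun i => by
        have h := c4 (i, t - 1) (Finset.mem_product.2
          ⟨Finset.mem_univ _, Finset.mem_range.2 (by omega)⟩)
        simp only [Nat.sub_add_cancel ht'.1] at h
        rw [← Finset.range_eq_Ico] at h
        rw [hct]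
        exact h.le) hcore
    simp only [sum_Icc_range]
    rw [hC, hU] at hfin
    exact hfin
  have hfinal : ENNReal.ofReal (1 - δ / 4) ≤ P S + ENNReal.ofReal (3 * δ / 4) := by
    refine hest.trans ((measure_mono hsub).trans ((measure_union_le _ _).trans ?_))
    gcongr
    refine (measure_union_le _ _).trans ?_
    rw [Pb0, zero_add]
    refine (measure_union_le _ _).trans ((add_le_add Pb1 ((measure_union_le _ _).trans
      (add_le_add Pb2 Pb3))).trans ?_)
    rw [← ENNReal.ofReal_add (by positivity) (by positivity),
      ← ENNReal.ofReal_add (by positivity) (by positivity)]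
    exact ENNReal.ofReal_le_ofReal (by linarith)
  have hsplit : ENNReal.ofReal (1 - δ / 4)
      = ENNReal.ofReal (1 - δ) + ENNReal.ofReal (3 * δ / 4) := by
    rw [← ENNReal.ofReal_add (by linarith) (by positivity)]
    congr 1; ring
  rw [hsplit] at hfinal
  exact (ENNReal.add_le_add_iff_right ENNReal.ofReal_ne_top).1 hfinal

end CBwK
end

section
/- (Lemma 5 of the paper: a version of the Bernstein–Freedman inequality.) Let (X_τ)_{τ ≥ 1} be a martingale difference sequence with respect to a filtration (F_s)_{s ≥ 0}, with |X_τ| ≤ K almost surely for all τ. For t ≥ 1, let 𝔖_t = Σ_{τ=1}^t E[ X_τ² | F_{τ−1} ] denote the sum of conditional variances of the first t increments. Then for every δ ∈ (0,1) and every t ≥ 1, with probability at least 1−δ: Σ_{τ=1}^t X_τ ≤ √( 2 𝔖_t ln(t/δ) ) + 2K ln(t/δ). -/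
open MeasureTheory Finset

/-- The coefficient of the quadratic term in the exponential bound. -/
noncomputable def bfG (l : ℝ) : ℝ := l ^ 2 / 2 + l ^ 3 / 4

lemma bfG_nonneg {l : ℝ} (hl : 0 ≤ l) : 0 ≤ bfG l := by unfold bfG; positivity

lemma bfG_continuous : Continuous bfG := by unfold bfG; fun_prop

lemma bf_exp {l y : ℝ} (h0 : 0 ≤ l) (h1 : l ≤ 1) (hy : |y| ≤ 1) :
    Real.exp (l * y) ≤ 1 + l * y + bfG l * y ^ 2 := by
  have hx : |l * y| ≤ 1 := by
    rw [abs_mul, abs_of_nonneg h0]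
    exact mul_le_one₀ h1 (abs_nonneg _) hy
  have h := Real.exp_bound hx (n := 3) (by norm_num)
  have h2 := (abs_le.1 h).2
  simp [Finset.sum_range_succ, Nat.factorial] at h2
  have h3 : (|l| * |y|) ^ 3 ≤ l ^ 3 * y ^ 2 := by
    rw [abs_of_nonneg h0, mul_pow, ← sq_abs y]
    have : |y| ^ 3 ≤ |y| ^ 2 := pow_le_pow_of_le_one (abs_nonneg _) hy (by norm_num)
    gcongr
  have h4 : 0 ≤ l ^ 3 * y ^ 2 := by positivity
  unfold bfG
  nlinarith

lemma bf_det {l L V : ℝ} (hl : 0 < l) (hV : 0 ≤ V)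
    (h1 : l ^ 2 * V ≤ 2 * L) (h2 : 2 * L ≤ l ^ 2 * V + 3 * l * L) :
    L + bfG l * V ≤ l * (Real.sqrt (2 * V * L) + 2 * L) := by
  have hs : l * V ≤ Real.sqrt (2 * V * L) := by
    apply Real.le_sqrt_of_sq_le
    nlinarith [mul_le_mul_of_nonneg_right h1 hV]
  have h3 : l * (l * V) ≤ l * Real.sqrt (2 * V * L) := by gcongr
  have h4 : l * (l ^ 2 * V) ≤ l * (2 * L) := by gcongr
  unfold bfG
  nlinarith

lemma bf_step {Ω : Type*} {m0 : MeasurableSpace Ω} (P : Measure Ω) [IsProbabilityMeasure P]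
    (G : MeasurableSpace Ω) (hG : G ≤ m0) (X : Ω → ℝ) (hXm : AEStronglyMeasurable[m0] X P)
    (hX : ∀ᵐ ω ∂P, |X ω| ≤ 1) (hX0 : P[X | G] =ᵐ[P] 0)
    (l : Ω → ℝ) (hlm : StronglyMeasurable[G] l) (hl : ∀ ω, 0 ≤ l ω ∧ l ω ≤ 1)
    (M : Ω → ℝ) (hMm : StronglyMeasurable[G] M) (C : ℝ) (hM : ∀ᵐ ω ∂P, 0 ≤ M ω ∧ M ω ≤ C) :
    ∫ ω, M ω * Real.exp (l ω * X ω - bfG (l ω) * (P[fun ω' => (X ω') ^ 2 | G]) ω) ∂P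
      ≤ ∫ ω, M ω ∂P := by
  set v := P[fun ω' => (X ω') ^ 2 | G] with hv
  have hvm : StronglyMeasurable[G] v := stronglyMeasurable_condExp
  have hX2m : AEStronglyMeasurable[m0] (fun ω => X ω ^ 2) P := hXm.pow 2
  have hX2 : ∀ᵐ ω ∂P, |X ω ^ 2| ≤ 1 := by
    filter_upwards [hX] with ω h
    rw [abs_pow]; exact pow_le_one₀ (abs_nonneg _) h
  have hXi : Integrable X P := Integrable.of_bound hXm 1 (by simpa using hX)
  have hX2i : Integrable (fun ω => X ω ^ 2) P := Integrable.of_bound hX2m 1 hX2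
  have hv0 : ∀ᵐ ω ∂P, 0 ≤ v ω :=
    condExp_nonneg (Filter.Eventually.of_forall fun ω => sq_nonneg _)
  have hgm : StronglyMeasurable[G] (fun ω => bfG (l ω)) := 
    bfG_continuous.comp_stronglyMeasurable hlm
  set W : Ω → ℝ := fun ω => M ω * Real.exp (-(bfG (l ω) * v ω)) with hW
  have hWm : StronglyMeasurable[G] W :=
    hMm.mul (Real.continuous_exp.comp_stronglyMeasurable (hgm.mul hvm).neg)
  have hWb : ∀ᵐ ω ∂P, 0 ≤ W ω ∧ W ω ≤ C := by
    filter_upwards [hM, hv0] with ω h1 h2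
    refine ⟨mul_nonneg h1.1 (Real.exp_pos _).le, le_trans ?_ h1.2⟩
    refine mul_le_of_le_one_right h1.1 (Real.exp_le_one_iff.2 ?_)
    have := mul_nonneg (bfG_nonneg (hl ω).1) h2
    linarith
  have hg1 : ∀ ω, bfG (l ω) ≤ 1 := by
    intro ω
    have := pow_le_one₀ (n := 2) (hl ω).1 (hl ω).2
    have := pow_le_one₀ (n := 3) (hl ω).1 (hl ω).2
    unfold bfG; linarith
  -- products of W, coefficients with X, X^2
  have hpb : ∀ (c : Ω → ℝ), StronglyMeasurable[G] c → (∀ ω, 0 ≤ c ω ∧ c ω ≤ 1) →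
      ∀ Y : Ω → ℝ, Integrable Y P →
      Integrable (fun ω => (W ω * c ω) * Y ω) P ∧
      Integrable (fun ω => (W ω * c ω) * (P[Y | G]) ω) P ∧
      ∫ ω, (W ω * c ω) * Y ω ∂P = ∫ ω, (W ω * c ω) * (P[Y | G]) ω ∂P := by
    intro c hcm hc Y hY
    have hm : StronglyMeasurable[G] (fun ω => W ω * c ω) := hWm.mul hcm
    have hb : ∀ᵐ ω ∂P, ‖W ω * c ω‖ ≤ C := by
      filter_upwards [hWb] with ω h
      rw [Real.norm_of_nonneg (mul_nonneg h.1 (hc ω).1)]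
      exact (mul_le_of_le_one_right h.1 (hc ω).2).trans h.2
    have i1 : Integrable (fun ω => (W ω * c ω) * Y ω) P :=
      hY.bdd_mul (hm.mono hG).aestronglyMeasurable hb
    have i2 : Integrable (fun ω => (W ω * c ω) * (P[Y | G]) ω) P :=
      integrable_condExp.bdd_mul (hm.mono hG).aestronglyMeasurable hb
    refine ⟨i1, i2, ?_⟩
    have := condExp_mul_of_stronglyMeasurable_left (μ := P) hm i1 hY
    rw [← integral_condExp hG]
    exact integral_congr_ae this
  obtain ⟨a1, a2, a3⟩ := hpb l hlm hl X hXi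
  obtain ⟨b1, b2, b3⟩ := hpb _ hgm (fun ω => ⟨bfG_nonneg (hl ω).1, hg1 ω⟩) _ hX2i
  have hWi : Integrable W P := by
    refine Integrable.of_bound (hWm.mono hG).aestronglyMeasurable C ?_
    filter_upwards [hWb] with ω h
    rw [Real.norm_of_nonneg h.1]; exact h.2
  have hMi : Integrable M P := by
    refine Integrable.of_bound (hMm.mono hG).aestronglyMeasurable C ?_
    filter_upwards [hM] with ω h
    rw [Real.norm_of_nonneg h.1]; exact h.2
  have a4 : ∫ ω, (W ω * l ω) * (P[X | G]) ω ∂P = 0 := by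
    rw [integral_congr_ae (g := fun _ => (0 : ℝ))]
    · simp
    · filter_upwards [hX0] with ω h
      simp [h]
  calc ∫ ω, M ω * Real.exp (l ω * X ω - bfG (l ω) * v ω) ∂P
      ≤ ∫ ω, (W ω + (W ω * l ω) * X ω + (W ω * bfG (l ω)) * X ω ^ 2) ∂P := by
        apply integral_mono_of_nonneg
        · filter_upwards [hM] with ω h
          exact mul_nonneg h.1 (Real.exp_pos _).le
        · exact (hWi.add a1).add b1
        · filter_upwards [hWb, hX] with ω h h2
          have := mul_le_mul_of_nonneg_left (bf_exp (hl ω).1 (hl ω).2 h2) h.1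
          have e : M ω * Real.exp (l ω * X ω - bfG (l ω) * v ω)
              = W ω * Real.exp (l ω * X ω) := by
            rw [hW, mul_assoc, ← Real.exp_add]; ring_nf
          rw [e]
          refine this.trans (le_of_eq ?_)
          ring
    _ = ∫ ω, (W ω + (W ω * bfG (l ω)) * v ω) ∂P := by
        rw [integral_add (f := fun ω => W ω + (W ω * l ω) * X ω) (hWi.add a1) b1, integral_add hWi a1, a3, a4, b3,
          integral_add hWi b2, add_zero]
    _ ≤ ∫ ω, M ω ∂P := by
        apply integral_mono_ae (hWi.add b2) hMi
        filter_upwards [hWb] with ω h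
        have h1 := Real.add_one_le_exp (bfG (l ω) * v ω)
        have h2 := mul_le_mul_of_nonneg_left h1 h.1
        have e : W ω * Real.exp (bfG (l ω) * v ω) = M ω := by
          rw [hW, mul_assoc, ← Real.exp_add]; simp
        change W ω + (W ω * bfG (l ω)) * v ω ≤ M ω
        linarith

lemma bf_super {Ω : Type*} {m0 : MeasurableSpace Ω} (P : Measure Ω) [IsProbabilityMeasure P]
    (F : Filtration ℕ m0) (Xs : ℕ → Ω → ℝ)
    (hadapted : ∀ τ, 1 ≤ τ → StronglyMeasurable[F τ] (Xs τ))
    (hmds : ∀ τ, 1 ≤ τ → P[Xs τ | F (τ - 1)] =ᵐ[P] 0)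
    (hbdd : ∀ τ, 1 ≤ τ → ∀ᵐ ω ∂P, |Xs τ ω| ≤ 1)
    (l : Ω → ℝ) (hlm : StronglyMeasurable[F 0] l) (hl : ∀ ω, 0 ≤ l ω ∧ l ω ≤ 1)
    (t : ℕ) :
    let M : Ω → ℝ := fun ω => Real.exp (l ω * ∑ τ ∈ Finset.Icc 1 t, Xs τ ω -
      bfG (l ω) * ∑ τ ∈ Finset.Icc 1 t, (P[fun ω' => (Xs τ ω') ^ 2 | F (τ - 1)]) ω)
    StronglyMeasurable[F t] M ∧ (∀ᵐ ω ∂P, M ω ≤ Real.exp t) ∧ ∫ ω, M ω ∂P ≤ 1 := by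
  induction t with
  | zero => simp [stronglyMeasurable_const]
  | succ n ih =>
    obtain ⟨h1, h2, h3⟩ := ih
    set M : Ω → ℝ := fun ω => Real.exp (l ω * ∑ τ ∈ Finset.Icc 1 n, Xs τ ω -
      bfG (l ω) * ∑ τ ∈ Finset.Icc 1 n, (P[fun ω' => (Xs τ ω') ^ 2 | F (τ - 1)]) ω) with hM
    intro M'
    have e : M' = fun ω => M ω * Real.exp (l ω * Xs (n + 1) ω -
        bfG (l ω) * (P[fun ω' => (Xs (n + 1) ω') ^ 2 | F n]) ω) := by
      funext ω
      simp only [M', hM, ← Real.exp_add]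
      rw [Finset.sum_Icc_succ_top (by omega), Finset.sum_Icc_succ_top (by omega)]
      simp only [Nat.add_sub_cancel]
      ring_nf
    rw [e]
    have hlm' := hlm.mono (F.mono (Nat.zero_le (n + 1)))
    refine ⟨?_, ?_, ?_⟩
    · refine (h1.mono (F.mono (Nat.le_succ n))).mul
        (Real.continuous_exp.comp_stronglyMeasurable ?_)
      refine (hlm'.mul (hadapted _ (by omega))).sub (StronglyMeasurable.mul ?_
        (stronglyMeasurable_condExp.mono (F.mono (Nat.le_succ n))))
      exact bfG_continuous.comp_stronglyMeasurable hlm'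
    · have hv0 : ∀ᵐ ω ∂P, 0 ≤ (P[fun ω' => (Xs (n + 1) ω') ^ 2 | F n]) ω :=
        condExp_nonneg (Filter.Eventually.of_forall fun ω => sq_nonneg _)
      filter_upwards [h2, hv0, hbdd (n + 1) (by omega)] with ω k1 k2 k3
      have : l ω * Xs (n + 1) ω -
        bfG (l ω) * (P[fun ω' => (Xs (n + 1) ω') ^ 2 | F n]) ω ≤ 1 := by
        have q1 := mul_nonneg (bfG_nonneg (hl ω).1) k2
        have q2 := (abs_le.1 k3).2
        have := hl ω
        nlinarith
      push_cast
      rw [Real.exp_add]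
      exact mul_le_mul k1 (Real.exp_le_exp.2 this) (Real.exp_pos _).le (Real.exp_pos _).le
    · refine le_trans (bf_step P (F n) (F.le n) (Xs (n + 1))
        ((hadapted (n + 1) (Nat.le_add_left 1 n)).mono (F.le _)).aestronglyMeasurable
        (hbdd (n + 1) (Nat.le_add_left 1 n))
        (hmds (n + 1) (Nat.le_add_left 1 n)) l (hlm.mono (F.mono (Nat.zero_le n))) hl M h1
        (Real.exp n) ?_) h3
      filter_upwards [h2] with ω k
      exact ⟨(Real.exp_pos _).le, k⟩

lemma bf_markov {Ω : Type*} {m0 : MeasurableSpace Ω} (P : Measure Ω) [IsProbabilityMeasure P]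
    (F : Filtration ℕ m0) (Xs : ℕ → Ω → ℝ)
    (hadapted : ∀ τ, 1 ≤ τ → StronglyMeasurable[F τ] (Xs τ))
    (hmds : ∀ τ, 1 ≤ τ → P[Xs τ | F (τ - 1)] =ᵐ[P] 0)
    (hbdd : ∀ τ, 1 ≤ τ → ∀ᵐ ω ∂P, |Xs τ ω| ≤ 1)
    (l : Ω → ℝ) (hlm : StronglyMeasurable[F 0] l) (hl : ∀ ω, 0 ≤ l ω ∧ l ω ≤ 1)
    (t : ℕ) (L : ℝ) :
    P {ω | L ≤ l ω * ∑ τ ∈ Finset.Icc 1 t, Xs τ ω -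
      bfG (l ω) * ∑ τ ∈ Finset.Icc 1 t, (P[fun ω' => (Xs τ ω') ^ 2 | F (τ - 1)]) ω}
      ≤ ENNReal.ofReal (Real.exp (-L)) := by
  obtain ⟨h1, h2, h3⟩ := bf_super P F Xs hadapted hmds hbdd l hlm hl t
  have hi := Integrable.of_bound (h1.mono (F.le t)).aestronglyMeasurable (μ := P) (Real.exp t) (by
    filter_upwards [h2] with ω h
    rw [Real.norm_of_nonneg (Real.exp_pos _).le]; exact h)
  have := mul_meas_ge_le_integral_of_nonneg
    (Filter.Eventually.of_forall fun ω => (Real.exp_pos _).le) hi (Real.exp L)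
  simp only [Real.exp_le_exp] at this
  rw [← ENNReal.ofReal_toReal (measure_ne_top P _)]
  apply ENNReal.ofReal_le_ofReal
  rw [Real.exp_neg, ← one_div, le_div_iff₀ (Real.exp_pos _), mul_comm]
  exact this.trans h3

lemma bf_unit {Ω : Type*} {m0 : MeasurableSpace Ω} (P : Measure Ω) [IsProbabilityMeasure P]
    (F : Filtration ℕ m0) (Xs : ℕ → Ω → ℝ)
    (hadapted : ∀ τ, 1 ≤ τ → StronglyMeasurable[F τ] (Xs τ))
    (hmds : ∀ τ, 1 ≤ τ → P[Xs τ | F (τ - 1)] =ᵐ[P] 0)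
    (hbdd : ∀ τ, 1 ≤ τ → ∀ᵐ ω ∂P, |Xs τ ω| ≤ 1)
    (δ : ℝ) (hδ : δ ∈ Set.Ioo (0 : ℝ) 1) (t : ℕ) (ht : 1 ≤ t) :
    P {ω | Real.sqrt (2 * (∑ τ ∈ Finset.Icc 1 t,
              (P[fun ω' => (Xs τ ω') ^ 2 | F (τ - 1)]) ω) * Real.log (t / δ))
            + 2 * Real.log (t / δ) < ∑ τ ∈ Finset.Icc 1 t, Xs τ ω} ≤ ENNReal.ofReal δ := by
  obtain ⟨hδ0, hδ1⟩ := hδ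
  have ht' : (1 : ℝ) ≤ t := by exact_mod_cast ht
  set L := Real.log (t / δ) with hLdef
  have hL : 0 < L := Real.log_pos (by rw [lt_div_iff₀ hδ0]; linarith)
  have hexp : Real.exp (-L) = δ / t := by
    rw [Real.exp_neg, hLdef, Real.exp_log (by positivity), inv_div]
  set S : Ω → ℝ := fun ω => ∑ τ ∈ Finset.Icc 1 t, Xs τ ω
  set V : Ω → ℝ := fun ω => ∑ τ ∈ Finset.Icc 1 t,
    (P[fun ω' => (Xs τ ω') ^ 2 | F (τ - 1)]) ω with hVdef
  have hV0 : ∀ᵐ ω ∂P, 0 ≤ V ω := by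
    have : ∀ᵐ ω ∂P, ∀ τ : ℕ, 0 ≤ (P[fun ω' => (Xs τ ω') ^ 2 | F (τ - 1)]) ω :=
      ae_all_iff.2 fun τ => condExp_nonneg (Filter.Eventually.of_forall fun ω => sq_nonneg _)
    filter_upwards [this] with ω h
    exact Finset.sum_nonneg fun τ _ => h τ
  have hVt : ∀ᵐ ω ∂P, V ω ≤ t := by
    have : ∀ᵐ ω ∂P, ∀ τ : ℕ, 1 ≤ τ → (P[fun ω' => (Xs τ ω') ^ 2 | F (τ - 1)]) ω ≤ 1 := by
      refine ae_all_iff.2 fun τ => ?_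
      by_cases h : 1 ≤ τ
      · have hb : ∀ᵐ ω ∂P, |Xs τ ω ^ 2| ≤ (1 : ℝ) := by
          filter_upwards [hbdd τ h] with ω h
          rw [abs_pow]; exact pow_le_one₀ (abs_nonneg _) h
        filter_upwards [ae_bdd_abs_condExp_of_ae_bdd_abs (m := F (τ - 1)) hb] with ω h _
        exact (abs_le.1 h).2
      · exact Filter.Eventually.of_forall fun ω h' => absurd h' h
    filter_upwards [this] with ω h
    calc V ω ≤ ∑ τ ∈ Finset.Icc 1 t, (1 : ℝ) :=
          Finset.sum_le_sum fun τ hτ => h τ (Finset.mem_Icc.1 hτ).1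
      _ = t := by simp
  -- properties of the choice of the parameter
  have hpar : ∀ b : ℝ, 0 < Real.sqrt (2 * L / max b (2 * L)) ∧
      Real.sqrt (2 * L / max b (2 * L)) ≤ 1 ∧
      Real.sqrt (2 * L / max b (2 * L)) ^ 2 * max b (2 * L) = 2 * L := by
    intro b
    have hm : 0 < max b (2 * L) := lt_max_of_lt_right (by linarith)
    refine ⟨Real.sqrt_pos.2 (by positivity), ?_, ?_⟩
    · refine Real.sqrt_le_one.2 ?_
      rw [div_le_one hm]; exact le_max_right _ _
    · rw [Real.sq_sqrt (by positivity)]; field_simp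
  have hone : ∀ b : ℝ, b ≤ 2 * L → Real.sqrt (2 * L / max b (2 * L)) = 1 := by
    intro b hb
    rw [max_eq_right hb, div_self (by linarith), Real.sqrt_one]
  have hfin : ∀ (l : ℝ) (ω : Ω), 0 < l → l ≤ 1 → 0 ≤ V ω → l ^ 2 * V ω ≤ 2 * L →
      2 * L ≤ l ^ 2 * V ω + 3 * l * L → Real.sqrt (2 * V ω * L) + 2 * L < S ω →
      L ≤ l * S ω - bfG l * V ω := by
    intro l ω h0 h1 h2 h3 h4 h5
    have := bf_det h0 h2 h3 h4
    have := mul_lt_mul_of_pos_left h5 h0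
    linarith
  rcases Nat.lt_or_ge t 2 with h2 | h2
  · have ht1 : t = 1 := by omega
    have hVm : StronglyMeasurable[F 0] V := by
      have : V = P[fun ω' => (Xs 1 ω') ^ 2 | F 0] := by
        funext ω; simp [hVdef, ht1]
      rw [this]; exact stronglyMeasurable_condExp
    have hlm : StronglyMeasurable[F 0] (fun ω => Real.sqrt (2 * L / max (V ω) (2 * L))) := by
      have : Measurable (fun x : ℝ => Real.sqrt (2 * L / max x (2 * L))) := by fun_prop
      exact (this.comp hVm.measurable).stronglyMeasurable
    have := bf_markov P F Xs hadapted hmds hbdd _ hlm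
      (fun ω => ⟨(hpar _).1.le, (hpar _).2.1⟩) t L
    have ed : δ / (t : ℝ) = δ := by rw [ht1]; simp
    rw [hexp, ed] at this
    refine le_trans (measure_mono_ae ?_) this
    filter_upwards [hV0] with ω v0 hω
    obtain ⟨p1, p2, p3⟩ := hpar (V ω)
    refine hfin _ ω p1 p2 v0 ?_ ?_ hω
    · refine le_trans ?_ p3.le
      gcongr
      exact le_max_left _ _
    · rcases le_total (V ω) (2 * L) with h | h
      · rw [hone _ h]; linarith
      · rw [max_eq_left h] at p3 ⊢
        rw [p3]
        have := mul_pos p1 hL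
        rw [max_eq_left h] at this
        linarith
  · have hL3 : 1 ≤ 3 * L := by
      have : Real.log 2 ≤ L := by
        apply Real.log_le_log (by norm_num)
        have : (2 : ℝ) ≤ t := by exact_mod_cast h2
        rw [le_div_iff₀ hδ0]; nlinarith
      have := Real.log_two_gt_d9
      linarith
    have hsub : P {ω | Real.sqrt (2 * V ω * L) + 2 * L < S ω} ≤
        P (⋃ j ∈ Finset.Icc 1 t, {ω | L ≤ Real.sqrt (2 * L / max (j : ℝ) (2 * L)) * S ω -
          bfG (Real.sqrt (2 * L / max (j : ℝ) (2 * L))) * V ω}) := by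
      refine measure_mono_ae ?_
      filter_upwards [hV0, hVt] with ω v0 vt hω
      obtain ⟨j, hj1, hj2, hj3, hj4⟩ : ∃ j : ℕ, 1 ≤ j ∧ j ≤ t ∧ V ω ≤ j ∧ (j : ℝ) - 1 ≤ V ω := by
        rcases Nat.eq_zero_or_pos ⌈V ω⌉₊ with h | h
        · exact ⟨1, le_rfl, ht, by have := Nat.ceil_eq_zero.1 h; push_cast; linarith,
            by push_cast; linarith⟩
        · exact ⟨⌈V ω⌉₊, h, Nat.ceil_le.2 vt, Nat.le_ceil _, by
            have := Nat.ceil_lt_add_one v0; linarith⟩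
      have : ω ∈ ⋃ j ∈ Finset.Icc 1 t,
          {ω | L ≤ Real.sqrt (2 * L / max (j : ℝ) (2 * L)) * S ω -
          bfG (Real.sqrt (2 * L / max (j : ℝ) (2 * L))) * V ω} := by
        refine Set.mem_iUnion₂.2 ⟨j, Finset.mem_Icc.2 ⟨hj1, hj2⟩, ?_⟩
        obtain ⟨p1, p2, p3⟩ := hpar j
        refine hfin _ ω p1 p2 v0 ?_ ?_ hω
        · refine le_trans ?_ p3.le
          gcongr
          exact hj3.trans (le_max_left _ _)
        · rcases le_total (j : ℝ) (2 * L) with h | h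
          · rw [hone _ h]; linarith
          · rw [max_eq_left h] at p1 p2 p3 ⊢
            set l := Real.sqrt (2 * L / (j : ℝ))
            have q1 : l ^ 2 * ((j : ℝ) - 1) ≤ l ^ 2 * V ω := by gcongr
            nlinarith
      exact this
    refine hsub.trans ((measure_biUnion_finset_le _ _).trans ?_)
    refine le_trans (Finset.sum_le_sum (g := fun _ => ENNReal.ofReal (δ / t)) ?_) ?_
    · intro j _
      rw [← hexp]
      exact bf_markov P F Xs hadapted hmds hbdd
        (fun _ => Real.sqrt (2 * L / max (j : ℝ) (2 * L))) stronglyMeasurable_const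
        (fun ω => ⟨(hpar _).1.le, (hpar _).2.1⟩) t L
    · rw [Finset.sum_const, Nat.card_Icc, nsmul_eq_mul, Nat.add_sub_cancel,
        ← ENNReal.ofReal_natCast, ← ENNReal.ofReal_mul (by positivity)]
      apply ENNReal.ofReal_le_ofReal
      rw [mul_div_cancel₀]
      positivity

/-- A version of the Bernstein–Freedman inequality (Lemma 5 of the paper): for a martingale
difference sequence `(X_τ)` with increments bounded by `K`, for every `δ ∈ (0,1)` and
`t ≥ 1`, with probability at least `1−δ`,
`Σ_{τ=1}^t X_τ ≤ √(2 𝔖_t ln(t/δ)) + 2K ln(t/δ)`, where `𝔖_t` is the (random) sum of the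
conditional variances of the first `t` increments. -/
theorem bernstein_freedman
    {Ω : Type*} {m0 : MeasurableSpace Ω} (P : Measure Ω) [IsProbabilityMeasure P]
    (F : Filtration ℕ m0) (Xs : ℕ → Ω → ℝ) (K : ℝ)
    (hadapted : ∀ τ, 1 ≤ τ → StronglyMeasurable[F τ] (Xs τ))
    (hint : ∀ τ, 1 ≤ τ → Integrable (Xs τ) P)
    (hmds : ∀ τ, 1 ≤ τ → P[Xs τ | F (τ - 1)] =ᵐ[P] 0)
    (hbdd : ∀ τ, 1 ≤ τ → ∀ᵐ ω ∂P, |Xs τ ω| ≤ K)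
    (δ : ℝ) (hδ : δ ∈ Set.Ioo (0 : ℝ) 1) (t : ℕ) (ht : 1 ≤ t) :
    ENNReal.ofReal (1 - δ) ≤
      P {ω | ∑ τ ∈ Finset.Icc 1 t, Xs τ ω ≤
          Real.sqrt (2 * (∑ τ ∈ Finset.Icc 1 t,
              (P[fun ω' => (Xs τ ω') ^ 2 | F (τ - 1)]) ω) * Real.log (t / δ))
            + 2 * K * Real.log (t / δ)} := by
  suffices h : P {ω | ∑ τ ∈ Finset.Icc 1 t, Xs τ ω ≤
          Real.sqrt (2 * (∑ τ ∈ Finset.Icc 1 t,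
              (P[fun ω' => (Xs τ ω') ^ 2 | F (τ - 1)]) ω) * Real.log (t / δ))
            + 2 * K * Real.log (t / δ)}ᶜ ≤ ENNReal.ofReal δ by
    rw [ENNReal.ofReal_sub _ hδ.1.le, ENNReal.ofReal_one, tsub_le_iff_right]
    refine le_trans ?_ (add_le_add_right h _)
    rw [← measure_univ (μ := P), ← Set.union_compl_self]
    exact measure_union_le _ _
  have hK0 : 0 ≤ K := by
    obtain ⟨ω, hω⟩ := (hbdd 1 le_rfl).exists
    exact (abs_nonneg _).trans hω
  rcases hK0.eq_or_lt with hK | hK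
  · subst hK
    have hz : ∀ᵐ ω ∂P, ∀ τ, 1 ≤ τ → Xs τ ω = 0 := by
      refine ae_all_iff.2 fun τ => ?_
      by_cases h : 1 ≤ τ
      · filter_upwards [hbdd τ h] with ω h _
        exact abs_nonpos_iff.1 h
      · exact Filter.Eventually.of_forall fun ω h' => absurd h' h
    rw [(mem_ae_iff (μ := P)).1]
    · exact zero_le
    · filter_upwards [hz] with ω h
      have : ∑ τ ∈ Finset.Icc 1 t, Xs τ ω = 0 :=
        Finset.sum_eq_zero fun τ hτ => h τ (Finset.mem_Icc.1 hτ).1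
      simp [this]
  · have key := bf_unit P F (fun τ ω => K⁻¹ * Xs τ ω)
      (fun τ h => (hadapted τ h).const_mul _)
      (fun τ h => by
        have h1 := condExp_smul (μ := P) K⁻¹ (Xs τ) (F (τ - 1))
        filter_upwards [h1, hmds τ h] with ω h1 h2
        have h1' : (P[fun ω => K⁻¹ * Xs τ ω | F (τ - 1)]) ω = K⁻¹ * (P[Xs τ | F (τ - 1)]) ω := h1
        rw [h1', h2]; simp)
      (fun τ h => by
        filter_upwards [hbdd τ h] with ω h
        rw [abs_mul, abs_of_pos (inv_pos.2 hK), inv_mul_le_iff₀ hK]; simpa using h)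
      δ hδ t ht
    refine le_trans (measure_mono_ae ?_) key
    have hsq : ∀ᵐ ω ∂P, ∀ τ : ℕ, (P[fun ω' => (K⁻¹ * Xs τ ω') ^ 2 | F (τ - 1)]) ω
        = (K⁻¹) ^ 2 * (P[fun ω' => (Xs τ ω') ^ 2 | F (τ - 1)]) ω := by
      refine ae_all_iff.2 fun τ => ?_
      have h1 := condExp_smul (μ := P) ((K⁻¹) ^ 2) (fun ω' => (Xs τ ω') ^ 2) (F (τ - 1))
      have e : (fun ω' => (K⁻¹ * Xs τ ω') ^ 2) = (K⁻¹) ^ 2 • (fun ω' => (Xs τ ω') ^ 2) := by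
        funext ω; simp [mul_pow]
      rw [e]
      filter_upwards [h1] with ω h1
      rw [h1]; simp
    filter_upwards [hsq] with ω hs hω
    have hω' : Real.sqrt (2 * (∑ τ ∈ Finset.Icc 1 t,
              (P[fun ω' => (Xs τ ω') ^ 2 | F (τ - 1)]) ω) * Real.log (t / δ))
            + 2 * K * Real.log (t / δ) < ∑ τ ∈ Finset.Icc 1 t, Xs τ ω := not_le.1 hω
    change Real.sqrt (2 * (∑ τ ∈ Finset.Icc 1 t,
              (P[fun ω' => (K⁻¹ * Xs τ ω') ^ 2 | F (τ - 1)]) ω) * Real.log (t / δ))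
            + 2 * Real.log (t / δ) < ∑ τ ∈ Finset.Icc 1 t, K⁻¹ * Xs τ ω
    simp only [hs, ← Finset.mul_sum]
    rw [lt_inv_mul_iff₀ hK]
    refine lt_of_eq_of_lt ?_ hω'
    have e : ∀ V L : ℝ, Real.sqrt (2 * (K⁻¹ ^ 2 * V) * L) = K⁻¹ * Real.sqrt (2 * V * L) := by
      intro V L
      rw [show 2 * (K⁻¹ ^ 2 * V) * L = K⁻¹ ^ 2 * (2 * V * L) by ring,
        Real.sqrt_mul (by positivity), Real.sqrt_sq (inv_pos.2 hK).le]
    rw [e]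
    field_simp
end
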